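/- Let q ∈ (0,1] and n ≥ 1. Then for every k ≥ 0 and every initial label configuration ρ, the return probabilities of the frozen n-walker H–V walk satisfy lim_{r→∞} p_{k,r}(ρ) ≥ 1 − |4q−2|/(nq) (the limit over r exists since p_{k,r}(ρ) is nondecreasing in r). -/

import Mathlib

/-!
The proof compares a logarithmic potential of the walkers with the labels they leave behind.

Let `f x = log (2 |x|² - 1)` off the origin and `f 0 = 0`.  A walker at `x` whose resampled label
is `H` with probability `p` changes `f` on average by `p * dH x + (1 - p) * dV x`, where `dH`, `dV`
are half the horizontal and vertical second differences.  Off the origin and its neighbours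
`dH + dV ≤ 0`, so this drift is at most `(1 - 2p) * tilt x`, where `tilt` is `dV` in the sector
`|x₂| ≤ |x₁|` and `-dH` elsewhere.  Since the sum of `dV` over a column telescopes, and the column
sums telescope again, the sum of `|tilt|` over the box of radius `r` is at most `4 log (2r + 1)`
(`sum_abs_tilt_le`).  The drift is cancelled by giving the labels `H` and `V` at `x` weights that
differ by `(1 - 2q) / q * tilt x`, and a bounded reward for each return pays for the failure near
the origin.  The resulting `energyStop` is a nonnegative supermartingale (`turn_energyStop_le`).
Initially it is at most `|1 - 2q| / q * 4 log (2r + 1) + O(k)`, whereas it is at least `2n log r`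
once all walkers are frozen with fewer than `k` returns.  Markov's inequality bounds the
probability of that event by `|4q - 2| / (nq) + O(1 / log r)` (`one_sub_le_iter_goal`).  All walkers
do freeze eventually, because `|x|²` grows by one on average with every move (`tendsto_sum_alive`).

The limit over `r` exists because the return probability is monotone in `r`.  Turns of walkers at
different sites commute and walkers at the same site are interchangeable, so additional turns
cannot hurt an optimal scheduler (`opt_le_turn`); hence the cyclic schedule run until all walkers
freeze in the larger ball is at least as good as any schedule in the smaller ball (`iter_goal_le`).

Expectations are handled as iterates of the one-turn transition operator `turn` acting on
functions of the state.  `lintegral_aug` identifies them with integrals against the law of the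
frozen walk.
-/

open MeasureTheory Filter
open scoped ENNReal

namespace HV

abbrev Z2 := ℤ × ℤ

/-- A label configuration: `true` stands for label `H`, `false` for label `V`. -/
abbrev Config := Z2 → Bool

/-- The state of the walk: positions of the `n` walkers and the label configuration. -/
abbrev State (n : ℕ) := (Fin n → Z2) × Config

/-- A trajectory: the sequence of positions of the active walker after each step. -/
abbrev Path := ℕ → Z2

/-- The walker that is active at the `(t+1)`-st step of the cyclic turn order. -/
def active (n : ℕ) (hn : 0 < n) (t : ℕ) : Fin n := ⟨t % n, Nat.mod_lt t hn⟩

/-- Update the state when walker `i` moves to `y`: the label of the vertex the walker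
leaves becomes `H` (`true`) if the move was horizontal, `V` (`false`) if vertical. -/
def apply' (n : ℕ) (s : State n) (i : Fin n) (y : Z2) : State n :=
  (Function.update s.1 i y,
    Function.update s.2 (s.1 i) (if y.2 = (s.1 i).2 then true else false))

/-- The one-step transition probability of the `H`–`V` walk with parameter `q`:
probability that, from state `s`, the active walker `i` moves to `y`.  The label of the
current location is first resampled (flipped with probability `q`), and then the walker
takes a uniform horizontal step if the new label is `H`, a uniform vertical step if the
new label is `V`. -/
noncomputable def weight (q : ℝ) (n : ℕ) (s : State n) (i : Fin n) (y : Z2) : ℝ≥0∞ :=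
  if y = s.1 i + (1, 0) ∨ y = s.1 i - (1, 0) then
    ENNReal.ofReal ((if s.2 (s.1 i) then 1 - q else q) / 2)
  else if y = s.1 i + (0, 1) ∨ y = s.1 i - (0, 1) then
    ENNReal.ofReal ((if s.2 (s.1 i) then q else 1 - q) / 2)
  else 0

/-- The deterministic reconstruction of the state of the `n`-walker `H`–`V` walk
(with all walkers starting at the origin and initial labels `ρ`) from a trajectory. -/
def seq (n : ℕ) (hn : 0 < n) (ρ : Config) (y : Path) : ℕ → State n
  | 0 => (fun _ => (0, 0), ρ)
  | t + 1 => apply' n (seq n hn ρ y t) (active n hn t) (y t)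

/-- `μ` is the law of the `n`-walker `H`–`V` walk with parameter `q` and initial labels `ρ`:
the finite-dimensional distributions are products of one-step transition probabilities. -/
def IsLaw (q : ℝ) (n : ℕ) (hn : 0 < n) (ρ : Config) (μ : Measure Path) : Prop :=
  ∀ (t : ℕ) (c : Path),
    μ {y : Path | ∀ s < t, y s = c s} =
      ∏ s ∈ Finset.range t, weight q n (seq n hn ρ c s) (active n hn s) (c s)

/-- A trajectory is recurrent if every vertex is visited infinitely many times. -/
def Recurrent (n : ℕ) (hn : 0 < n) (ρ : Config) (y : Path) : Prop :=
  ∀ v : Z2, {t : ℕ | ∃ i, (seq n hn ρ y t).1 i = v}.Infinite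

end HV

namespace HV

/-- The Euclidean norm of a lattice point. -/
noncomputable def norm2 (x : Z2) : ℝ := Real.sqrt ((x.1 : ℝ) ^ 2 + (x.2 : ℝ) ^ 2)

/-- The open Euclidean ball `B_r` of radius `r` around the origin in `ℤ²`. -/
def ball (r : ℝ) : Set Z2 := {x | norm2 x < r}

/-- `x` and `y` are nearest neighbors in `ℤ²`. -/
def adj (x y : Z2) : Prop := |x.1 - y.1| + |x.2 - y.2| = 1

/-- The outer boundary `∂B_r` of the ball `B_r`. -/
def bdry (r : ℝ) : Set Z2 := {x | x ∉ ball r ∧ ∃ y, adj x y ∧ y ∈ ball r}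

open Classical in
/-- Update of the state of the frozen walk: a walker located on `∂B_r` is frozen and
skips its turn. -/
noncomputable def fapply (n : ℕ) (r : ℝ) (s : State n) (i : Fin n) (y : Z2) : State n :=
  if s.1 i ∈ bdry r then s else apply' n s i y

open Classical in
/-- The one-step transition probability of the frozen `H`–`V` walk: a walker located on
`∂B_r` stays put with probability one. -/
noncomputable def fweight (q : ℝ) (n : ℕ) (r : ℝ) (s : State n) (i : Fin n) (y : Z2) :
    ℝ≥0∞ :=
  if s.1 i ∈ bdry r then (if y = s.1 i then 1 else 0) else weight q n s i y

/-- The deterministic reconstruction of the state of the frozen `n`-walker `H`–`V` walk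
in `B_r` (with all walkers starting at the origin and initial labels `ρ`) from a
trajectory. -/
noncomputable def fseq (n : ℕ) (hn : 0 < n) (r : ℝ) (ρ : Config) (y : Path) :
    ℕ → State n
  | 0 => (fun _ => (0, 0), ρ)
  | t + 1 => fapply n r (fseq n hn r ρ y t) (active n hn t) (y t)

/-- `μ` is the law of the frozen `n`-walker `H`–`V` walk in `B_r` with parameter `q` and
initial labels `ρ`. -/
def IsFrozenLaw (q : ℝ) (n : ℕ) (hn : 0 < n) (r : ℝ) (ρ : Config) (μ : Measure Path) :
    Prop :=
  ∀ (t : ℕ) (c : Path),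
    μ {y : Path | ∀ s < t, y s = c s} =
      ∏ s ∈ Finset.range t, fweight q n r (fseq n hn r ρ c s) (active n hn s) (c s)

open Classical in
/-- `R_{t,r}`: the number of returns to the origin up to time `t` of a walk with state
sequence `S`. -/
noncomputable def returns (n : ℕ) (S : ℕ → State n) (t : ℕ) : ℕ :=
  ((Finset.Icc 1 t).filter fun s =>
    ∃ i, (S (s - 1)).1 i ≠ (0, 0) ∧ (S s).1 i = (0, 0)).card

open Classical in
/-- `N_t`: the number of departures from the origin up to time `t` of a walk with state
sequence `S`. -/
noncomputable def departures (n : ℕ) (S : ℕ → State n) (t : ℕ) : ℕ :=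
  ((Finset.Icc 1 t).filter fun s =>
    ∃ i, (S (s - 1)).1 i = (0, 0) ∧ (S s).1 i ≠ (0, 0)).card

/-- The return probability `p_{k,r}(ρ) = lim_{t→∞} P[R_{t,r} ≥ k]` of the frozen walk
with law `μr`. -/
noncomputable def returnProb (n : ℕ) (hn : 0 < n) (r : ℝ) (ρ : Config)
    (μr : Measure Path) (k : ℕ) : ℝ :=
  limUnder atTop fun t =>
    (μr {y : Path | k ≤ returns n (fun u => fseq n hn r ρ y u) t}).toReal

open Classical in
/-- The stopping time `τ_{k,r}(ρ)`: the first time at which the frozen walk has either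
returned to the origin `k` times or all walkers are frozen at `∂B_r`. -/
noncomputable def tau (n : ℕ) (hn : 0 < n) (r : ℝ) (ρ : Config) (k : ℕ) (y : Path) :
    ℕ :=
  sInf {t : ℕ | returns n (fun u => fseq n hn r ρ y u) t = k ∨
    ∀ i, (fseq n hn r ρ y t).1 i ∈ bdry r}

end HV

namespace HV

/-! ### The one-turn operator -/

/-- A state of the walk together with the number of returns to the origin so far. -/
abbrev AState (n : ℕ) := State n × ℕ

/-- Walker `i` moves to `y`; the return counter increases if the walker arrives at the origin
from elsewhere. -/
def move {n : ℕ} (s : AState n) (i : Fin n) (y : Z2) : AState n :=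
  (apply' n s.1 i y, s.2 + if s.1.1 i ≠ (0, 0) ∧ y = (0, 0) then 1 else 0)

/-- The probability that the label resampled from `b` is `H`. -/
def hprob (q : ℝ) (b : Bool) : ℝ := if b then 1 - q else q

/-- The expectation of `F` after a move of walker `i` from state `s`. -/
noncomputable def avg {n : ℕ} (q : ℝ) (i : Fin n) (F : AState n → ℝ) (s : AState n) : ℝ :=
  hprob q (s.1.2 (s.1.1 i)) / 2 *
      (F (move s i (s.1.1 i + (1, 0))) + F (move s i (s.1.1 i - (1, 0)))) +
    (1 - hprob q (s.1.2 (s.1.1 i))) / 2 *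
      (F (move s i (s.1.1 i + (0, 1))) + F (move s i (s.1.1 i - (0, 1))))

open Classical in
/-- The expectation of `F` after a turn of walker `i` from state `s`, when walkers move inside
the region `A` and skip their turns outside `A`. -/
noncomputable def turn {n : ℕ} (q : ℝ) (A : Set Z2) (i : Fin n) (F : AState n → ℝ)
    (s : AState n) : ℝ :=
  if s.1.1 i ∈ A then avg q i F s else F s

/-- The initial state: all walkers at the origin, labels `ρ`, no returns. -/
def start (n : ℕ) (ρ : Config) : AState n := ((fun _ => (0, 0), ρ), 0)

/-- `iter q A hn t F s` is the expectation of `F` after `t` turns in cyclic order, started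
from `s`. -/
noncomputable def iter {n : ℕ} (q : ℝ) (A : Set Z2) (hn : 0 < n) :
    ℕ → (AState n → ℝ) → AState n → ℝ
  | 0, F => F
  | t + 1, F => iter q A hn t (turn q A (active n hn t) F)

section Operators

variable {n : ℕ} {q : ℝ} {A : Set Z2}

lemma turn_of_mem {i : Fin n} {F : AState n → ℝ} {s : AState n} (h : s.1.1 i ∈ A) :
    turn q A i F s = avg q i F s := if_pos h

lemma turn_of_notMem {i : Fin n} {F : AState n → ℝ} {s : AState n} (h : s.1.1 i ∉ A) :
    turn q A i F s = F s := if_neg h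

lemma hprob_nonneg (hq : q ∈ Set.Ioc (0 : ℝ) 1) (b : Bool) : 0 ≤ hprob q b := by
  unfold hprob; split_ifs <;> linarith [hq.1, hq.2]

lemma hprob_le_one (hq : q ∈ Set.Ioc (0 : ℝ) 1) (b : Bool) : hprob q b ≤ 1 := by
  unfold hprob; split_ifs <;> linarith [hq.1, hq.2]

lemma avg_le_avg (hq : q ∈ Set.Ioc (0 : ℝ) 1) {i : Fin n} {F G : AState n → ℝ} {s s' : AState n}
    (hl : s.1.2 (s.1.1 i) = s'.1.2 (s'.1.1 i)) (hp : s.1.1 i = s'.1.1 i)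
    (h : ∀ y, F (move s i y) ≤ G (move s' i y)) : avg q i F s ≤ avg q i G s' := by
  have h0 := hprob_nonneg hq (s'.1.2 (s'.1.1 i))
  have h1 := hprob_le_one hq (s'.1.2 (s'.1.1 i))
  unfold avg
  rw [hl, hp]
  exact add_le_add
    (mul_le_mul_of_nonneg_left (add_le_add (h _) (h _)) (by linarith))
    (mul_le_mul_of_nonneg_left (add_le_add (h _) (h _)) (by linarith))

lemma avg_of_const {i : Fin n} {F : AState n → ℝ} {s : AState n} {c : ℝ}
    (h : ∀ y, F (move s i y) = c) : avg q i F s = c := by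
  unfold avg; simp only [h]; ring

lemma avg_add (i : Fin n) (F G : AState n → ℝ) (s : AState n) :
    avg q i (fun s => F s + G s) s = avg q i F s + avg q i G s := by
  unfold avg; ring

lemma turn_mono (hq : q ∈ Set.Ioc (0 : ℝ) 1) (i : Fin n) {F G : AState n → ℝ}
    (h : ∀ s, F s ≤ G s) (s : AState n) : turn q A i F s ≤ turn q A i G s := by
  unfold turn
  split_ifs
  · exact avg_le_avg hq rfl rfl fun y => h _
  · exact h s

lemma turn_const (i : Fin n) (c : ℝ) : turn q A i (fun _ => c) = fun _ => c := by
  funext s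
  unfold turn
  split_ifs
  · exact avg_of_const fun _ => rfl
  · rfl

lemma turn_add (i : Fin n) (F G : AState n → ℝ) :
    turn q A i (fun s => F s + G s) = fun s => turn q A i F s + turn q A i G s := by
  funext s
  unfold turn
  split_ifs
  · exact avg_add i F G s
  · rfl

lemma turn_mul (i : Fin n) (c : ℝ) (F : AState n → ℝ) :
    turn q A i (fun s => c * F s) = fun s => c * turn q A i F s := by
  funext s
  unfold turn avg
  split_ifs <;> ring

lemma le_turn_of_le_move (hq : q ∈ Set.Ioc (0 : ℝ) 1) {i : Fin n} {F : AState n → ℝ}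
    {s : AState n} (h : ∀ y, F s ≤ F (move s i y)) : F s ≤ turn q A i F s := by
  unfold turn
  split_ifs
  · calc F s = avg q i (fun _ => F s) s := (avg_of_const fun _ => rfl).symm
      _ ≤ _ := avg_le_avg hq rfl rfl h
  · exact le_rfl

variable {hn : 0 < n}

lemma iter_mono (hq : q ∈ Set.Ioc (0 : ℝ) 1) (t : ℕ) {F G : AState n → ℝ}
    (h : ∀ s, F s ≤ G s) (s : AState n) : iter q A hn t F s ≤ iter q A hn t G s := by
  induction t generalizing F G with
  | zero => exact h s
  | succ t ih => exact ih (turn_mono hq _ h)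

lemma iter_const (t : ℕ) (c : ℝ) (s : AState n) : iter q A hn t (fun _ => c) s = c := by
  induction t with
  | zero => rfl
  | succ t ih => rw [iter, turn_const, ih]

lemma iter_add (t : ℕ) (F G : AState n → ℝ) (s : AState n) :
    iter q A hn t (fun s => F s + G s) s = iter q A hn t F s + iter q A hn t G s := by
  induction t generalizing F G with
  | zero => rfl
  | succ t ih => rw [iter, turn_add, ih]; rfl

lemma iter_mul (t : ℕ) (c : ℝ) (F : AState n → ℝ) (s : AState n) :
    iter q A hn t (fun s => c * F s) s = c * iter q A hn t F s := by
  induction t generalizing F with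
  | zero => rfl
  | succ t ih => rw [iter, turn_mul, ih]; rfl

lemma iter_sum {ι : Type*} (J : Finset ι) (t : ℕ) (F : ι → AState n → ℝ) (s : AState n) :
    iter q A hn t (fun s => ∑ j ∈ J, F j s) s = ∑ j ∈ J, iter q A hn t (F j) s := by
  classical
  induction J using Finset.induction_on with
  | empty => simpa using iter_const t 0 s
  | insert j J hj ih =>
    simp only [Finset.sum_insert hj]
    rw [iter_add, ih]

/-- A (time-dependent) supermartingale decreases in expectation. -/
lemma iter_le_of_super (hq : q ∈ Set.Ioc (0 : ℝ) 1) (F : ℕ → AState n → ℝ)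
    (h : ∀ t s, turn q A (active n hn t) (F (t + 1)) s ≤ F t s) (t : ℕ) (s : AState n) :
    iter q A hn t (F t) s ≤ F 0 s := by
  induction t with
  | zero => exact le_rfl
  | succ t ih => exact (iter_mono hq t (h t) s).trans ih

end Operators

/-! ### The abelian property and monotonicity in the region -/

open Classical in
/-- The indicator of at least `k` returns. -/
noncomputable def goal {n : ℕ} (k : ℕ) (s : AState n) : ℝ := if k ≤ s.2 then 1 else 0

open Classical in
/-- The indicator that walker `i` is in `A`, that is, not frozen. -/
noncomputable def alive {n : ℕ} (A : Set Z2) (i : Fin n) (s : AState n) : ℝ :=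
  if s.1.1 i ∈ A then 1 else 0

/-- The optimal probability of achieving `k` returns within `m` turns, when before each turn
one may choose which walker is activated. -/
noncomputable def opt {n : ℕ} (q : ℝ) (A : Set Z2) (hn : 0 < n) (k : ℕ) :
    ℕ → AState n → ℝ
  | 0 => goal k
  | m + 1 => fun s => Finset.univ.sup' ⟨(⟨0, hn⟩ : Fin n), Finset.mem_univ _⟩
      fun i => turn q A i (opt q A hn k m) s

/-- Invariance under exchanging two walkers. -/
def Symm {n : ℕ} (F : AState n → ℝ) : Prop :=
  ∀ (i j : Fin n) (X : Fin n → Z2) (l : Config) (c : ℕ),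
    F ((X ∘ Equiv.swap i j, l), c) = F ((X, l), c)

section Abelian

variable {n : ℕ} {q : ℝ} {A : Set Z2}

lemma move_swap (a b i : Fin n) (X : Fin n → Z2) (l : Config) (c : ℕ) (y : Z2) :
    move ((X ∘ Equiv.swap a b, l), c) i y =
      ((((move ((X, l), c) (Equiv.swap a b i) y).1.1 ∘ Equiv.swap a b),
        (move ((X, l), c) (Equiv.swap a b i) y).1.2),
        (move ((X, l), c) (Equiv.swap a b i) y).2) := by
  have : Function.update (X ∘ Equiv.swap a b) i y =
      Function.update X (Equiv.swap a b i) y ∘ Equiv.swap a b := by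
    funext j
    by_cases hj : j = i
    · subst hj; simp
    · simp [hj]
  simp [move, apply', this]

lemma Symm.turn_swap {F : AState n → ℝ} (hF : Symm F) (a b i : Fin n) (X : Fin n → Z2)
    (l : Config) (c : ℕ) :
    turn q A i F ((X ∘ Equiv.swap a b, l), c) = turn q A (Equiv.swap a b i) F ((X, l), c) := by
  have h : ∀ y, F (move ((X ∘ Equiv.swap a b, l), c) i y) =
      F (move ((X, l), c) (Equiv.swap a b i) y) := fun y => by
    rw [move_swap, hF]
  unfold turn avg
  simp only [h, Function.comp_apply]
  rw [show F ((X ∘ Equiv.swap a b, l), c) = F ((X, l), c) from hF a b X l c]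

/-- For a symmetric `F`, it does not matter which of two walkers at the same site moves. -/
lemma Symm.turn_eq {F : AState n → ℝ} (hF : Symm F) {i j : Fin n} {s : AState n}
    (h : s.1.1 i = s.1.1 j) : turn q A i F s = turn q A j F s := by
  obtain ⟨⟨X, l⟩, c⟩ := s
  have hX : X ∘ Equiv.swap i j = X := by
    funext a
    rcases eq_or_ne a i with rfl | hi
    · simpa using h.symm
    rcases eq_or_ne a j with rfl | hj
    · simpa using h
    simp [Equiv.swap_apply_of_ne_of_ne hi hj]
  have := hF.turn_swap (q := q) (A := A) i j i X l c
  rwa [hX, Equiv.swap_apply_left] at this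

/-- Moves of two walkers standing at different sites commute. -/
lemma move_comm {s : AState n} {i j : Fin n} (h : s.1.1 i ≠ s.1.1 j) (y z : Z2) :
    move (move s i y) j z = move (move s j z) i y := by
  have hij : i ≠ j := fun e => h (by rw [e])
  obtain ⟨⟨X, l⟩, c⟩ := s
  simp only at h
  simp only [move, apply', Function.update_of_ne hij, Function.update_of_ne hij.symm, ne_eq]
  rw [Function.update_comm hij, Function.update_comm h, Nat.add_right_comm]

lemma turn_comm {s : AState n} {i j : Fin n} (h : s.1.1 i ≠ s.1.1 j) (F : AState n → ℝ) :
    turn q A i (turn q A j F) s = turn q A j (turn q A i F) s := by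
  have hij : i ≠ j := fun e => h (by rw [e])
  have e1 : ∀ y, (move s i y).1.1 j = s.1.1 j := fun y => Function.update_of_ne hij.symm _ _
  have e2 : ∀ y, (move s j y).1.1 i = s.1.1 i := fun y => Function.update_of_ne hij _ _
  have l1 : ∀ y, (move s i y).1.2 (s.1.1 j) = s.1.2 (s.1.1 j) :=
    fun y => Function.update_of_ne h.symm _ _
  have l2 : ∀ y, (move s j y).1.2 (s.1.1 i) = s.1.2 (s.1.1 i) :=
    fun y => Function.update_of_ne h _ _
  by_cases hi : s.1.1 i ∈ A <;> by_cases hj : s.1.1 j ∈ A <;>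
    simp only [turn, avg, e1, e2, l1, l2, hi, hj, if_true, if_false, move_comm h]
  ring

lemma goal_le_turn (hq : q ∈ Set.Ioc (0 : ℝ) 1) (k : ℕ) (i : Fin n) (s : AState n) :
    goal k s ≤ turn q A i (goal k) s := by
  refine le_turn_of_le_move hq fun y => ?_
  have : s.2 ≤ (move s i y).2 := Nat.le_add_right _ _
  unfold goal
  split_ifs <;> first | omega | norm_num

variable {hn : 0 < n} {k : ℕ}

lemma turn_le_opt_succ (m : ℕ) (i : Fin n) (s : AState n) :
    turn q A i (opt q A hn k m) s ≤ opt q A hn k (m + 1) s :=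
  Finset.le_sup' (fun i => turn q A i (opt q A hn k m) s) (Finset.mem_univ i)

lemma exists_opt_succ (m : ℕ) (s : AState n) :
    ∃ i, opt q A hn k (m + 1) s = turn q A i (opt q A hn k m) s := by
  obtain ⟨i, -, hi⟩ := Finset.exists_mem_eq_sup' ⟨(⟨0, hn⟩ : Fin n), Finset.mem_univ _⟩
    fun i => turn q A i (opt q A hn k m) s
  exact ⟨i, hi⟩

lemma opt_symm (m : ℕ) : Symm (opt q A hn k m) := by
  induction m with
  | zero => intro i j X l c; rfl
  | succ m ih =>
    have key : ∀ (i j : Fin n) (X : Fin n → Z2) (l : Config) (c : ℕ),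
        opt q A hn k (m + 1) ((X ∘ Equiv.swap i j, l), c) ≤
          opt q A hn k (m + 1) ((X, l), c) := by
      intro i j X l c
      obtain ⟨a, ha⟩ := exists_opt_succ (q := q) (A := A) (hn := hn) (k := k) m
        ((X ∘ Equiv.swap i j, l), c)
      rw [ha, ih.turn_swap]
      exact turn_le_opt_succ m _ _
    intro i j X l c
    refine le_antisymm (key i j X l c) ?_
    have := key i j (X ∘ Equiv.swap i j) l c
    rwa [Function.comp_assoc, ← Equiv.coe_trans, Equiv.swap_swap, Equiv.coe_refl,
      Function.comp_id] at this

/-- The abelian property: granting an arbitrary walker an additional turn before the `m` turns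
chosen optimally does not reduce the optimal probability.  An optimal first turn of another walker
commutes with the additional turn, or is equivalent to it when both walkers are at the same
site. -/
lemma opt_le_turn (hq : q ∈ Set.Ioc (0 : ℝ) 1) (m : ℕ) (i : Fin n) (s : AState n) :
    opt q A hn k m s ≤ turn q A i (opt q A hn k m) s := by
  induction m generalizing i s with
  | zero => exact goal_le_turn hq k i s
  | succ m ih =>
    have mono : ∀ s, opt q A hn k m s ≤ opt q A hn k (m + 1) s := fun s =>
      (ih i s).trans (turn_le_opt_succ m i s)
    obtain ⟨j, hj⟩ := exists_opt_succ (q := q) (A := A) (hn := hn) (k := k) m s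
    rw [hj]
    by_cases h : s.1.1 i = s.1.1 j
    · rw [← (opt_symm m).turn_eq h]
      exact turn_mono hq i mono s
    · calc turn q A j (opt q A hn k m) s
          ≤ turn q A j (turn q A i (opt q A hn k m)) s := turn_mono hq j (ih i) s
        _ = turn q A i (turn q A j (opt q A hn k m)) s := (turn_comm h _).symm
        _ ≤ _ := turn_mono hq i (turn_le_opt_succ m j) s

lemma iter_opt_le (hq : q ∈ Set.Ioc (0 : ℝ) 1) (t m : ℕ) (s : AState n) :
    iter q A hn t (opt q A hn k m) s ≤ opt q A hn k (m + t) s := by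
  induction t generalizing m with
  | zero => exact le_rfl
  | succ t ih =>
    refine (iter_mono hq t (turn_le_opt_succ m _) s).trans ((ih (m + 1)).trans_eq ?_)
    congr 1; omega

lemma opt_le_iter (hq : q ∈ Set.Ioc (0 : ℝ) 1) (t m : ℕ) (s : AState n) :
    opt q A hn k m s ≤ iter q A hn t (opt q A hn k m) s := by
  induction t with
  | zero => exact le_rfl
  | succ t ih => exact ih.trans (iter_mono hq t (opt_le_turn hq m _) s)

lemma opt_mono_region (hq : q ∈ Set.Ioc (0 : ℝ) 1) {B : Set Z2} (hAB : A ⊆ B) (m : ℕ)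
    (s : AState n) : opt q A hn k m s ≤ opt q B hn k m s := by
  induction m generalizing s with
  | zero => exact le_rfl
  | succ m ih =>
    obtain ⟨i, hi⟩ := exists_opt_succ (q := q) (A := A) (hn := hn) (k := k) m s
    rw [hi]
    refine le_trans ?_ (turn_le_opt_succ m i s)
    by_cases h : s.1.1 i ∈ A
    · rw [turn_of_mem h, turn_of_mem (hAB h)]
      exact avg_le_avg hq rfl rfl fun y => ih _
    · rw [turn_of_notMem h]
      exact (ih s).trans (opt_le_turn hq m i s)

lemma opt_le_one (hq : q ∈ Set.Ioc (0 : ℝ) 1) (m : ℕ) (s : AState n) :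
    opt q A hn k m s ≤ 1 := by
  induction m generalizing s with
  | zero => unfold opt goal; split_ifs <;> norm_num
  | succ m ih =>
    obtain ⟨i, hi⟩ := exists_opt_succ (q := q) (A := A) (hn := hn) (k := k) m s
    rw [hi]
    exact (turn_mono hq i ih s).trans_eq (by rw [turn_const])

lemma opt_of_frozen (m : ℕ) {s : AState n} (h : ∀ i, s.1.1 i ∉ A) :
    opt q A hn k m s = goal k s := by
  induction m with
  | zero => rfl
  | succ m ih =>
    obtain ⟨i, hi⟩ := exists_opt_succ (q := q) (A := A) (hn := hn) (k := k) m s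
    rw [hi, turn_of_notMem (h i), ih]

lemma goal_nonneg (k : ℕ) (s : AState n) : 0 ≤ goal k s := by
  unfold goal; split_ifs <;> norm_num

lemma goal_le_one (k : ℕ) (s : AState n) : goal k s ≤ 1 := by
  unfold goal; split_ifs <;> norm_num

lemma alive_nonneg (i : Fin n) (s : AState n) : 0 ≤ alive A i s := by
  unfold alive; split_ifs <;> norm_num

open Classical in
lemma alive_congr {i : Fin n} {s s' : AState n} (h : s.1.1 i = s'.1.1 i) :
    alive A i s = alive A i s' := congrArg (fun z => if z ∈ A then (1 : ℝ) else 0) h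

lemma one_le_sum_alive {i : Fin n} {s : AState n} (h : s.1.1 i ∈ A) :
    1 ≤ ∑ i, alive A i s :=
  calc (1 : ℝ) = alive A i s := (if_pos h).symm
    _ ≤ _ := Finset.single_le_sum (fun i _ => alive_nonneg i s) (Finset.mem_univ i)

lemma opt_le_goal_add (hq : q ∈ Set.Ioc (0 : ℝ) 1) (m : ℕ) (s : AState n) :
    opt q A hn k m s ≤ goal k s + ∑ i, alive A i s := by
  by_cases h : ∀ i, s.1.1 i ∉ A
  · rw [opt_of_frozen m h]
    linarith [Finset.sum_nonneg fun i (_ : i ∈ Finset.univ) => alive_nonneg (A := A) i s]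
  · push Not at h
    obtain ⟨i, hi⟩ := h
    linarith [one_le_sum_alive hi, goal_nonneg k s, opt_le_one (A := A) (hn := hn) (k := k) hq m s]

/-- The cyclic strategy in the larger region does as well as any strategy in the smaller one,
up to the probability that some walker is still unfrozen. -/
lemma iter_goal_le (hq : q ∈ Set.Ioc (0 : ℝ) 1) {B : Set Z2} (hAB : A ⊆ B) (t u : ℕ)
    (s : AState n) :
    iter q A hn t (goal k) s ≤
      iter q B hn u (goal k) s + ∑ i, iter q B hn u (alive B i) s :=
  calc iter q A hn t (goal k) s ≤ opt q A hn k (0 + t) s := iter_opt_le hq t 0 s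
    _ ≤ opt q B hn k (0 + t) s := opt_mono_region hq hAB _ s
    _ ≤ iter q B hn u (opt q B hn k (0 + t)) s := opt_le_iter hq u _ s
    _ ≤ iter q B hn u (fun s => goal k s + ∑ i, alive B i s) s :=
      iter_mono hq u (opt_le_goal_add hq _) s
    _ = _ := by rw [iter_add, iter_sum]

lemma iter_goal_mono (hq : q ∈ Set.Ioc (0 : ℝ) 1) (s : AState n) :
    Monotone fun t => iter q A hn t (goal k) s :=
  monotone_nat_of_le_succ fun t => iter_mono hq t (goal_le_turn hq k _) s

lemma iter_goal_le_one (hq : q ∈ Set.Ioc (0 : ℝ) 1) (t : ℕ) (s : AState n) :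
    iter q A hn t (goal k) s ≤ 1 :=
  (iter_mono hq t (goal_le_one k) s).trans_eq (iter_const t 1 s)

end Abelian

end HV
namespace HV

/-! ### All walkers freeze -/

/-- The squared Euclidean norm. -/
def nsq (x : Z2) : ℝ := (x.1 : ℝ) ^ 2 + (x.2 : ℝ) ^ 2

lemma mem_ball_iff (r : ℕ) (x : Z2) : x ∈ ball (r : ℝ) ↔ nsq x < (r : ℝ) ^ 2 := by
  show Real.sqrt (nsq x) < r ↔ _
  rcases Nat.eq_zero_or_pos r with rfl | hr
  · have : 0 ≤ nsq x := by unfold nsq; positivity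
    have h2 := Real.sqrt_nonneg (nsq x)
    constructor <;> intro h
    · simp only [Nat.cast_zero] at h; linarith
    · simp only [Nat.cast_zero] at h; norm_num at h; linarith
  · exact Real.sqrt_lt' (by exact_mod_cast hr)

/-- The number of turns of walker `i` before time `t`. -/
def numTurns {n : ℕ} (i : Fin n) (t : ℕ) : ℕ := Nat.count (fun m => m % n = i) t

lemma tendsto_numTurns {n : ℕ} (hn : 0 < n) (i : Fin n) :
    Tendsto (numTurns i) atTop atTop := by
  have h : ∀ t, t / n ≤ numTurns i t := fun t => by
    have := Nat.count_modEq_card t hn (i : ℕ)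
    simp only [Nat.ModEq, Nat.mod_eq_of_lt i.2] at this
    unfold numTurns
    rw [this]
    exact Nat.le_add_right _ _
  exact tendsto_atTop_mono h (Nat.tendsto_div_const_atTop hn.ne')

section Freezing

variable {n : ℕ} {q : ℝ}

/-- Each turn of an unfrozen walker increases its expected squared norm by exactly one, whatever
the label, while the squared norm stays at most `(r + 1) ^ 2`. -/
lemma iter_alive_le (hq : q ∈ Set.Ioc (0 : ℝ) 1) (hn : 0 < n) (r : ℕ) (i : Fin n) (t : ℕ)
    (ρ : Config) :
    numTurns i t * iter q (ball (r : ℝ)) hn t (alive (ball (r : ℝ)) i) (start n ρ) ≤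
      ((r : ℝ) + 1) ^ 2 := by
  set C : ℝ := ((r : ℝ) + 1) ^ 2 with hC
  set F : ℕ → AState n → ℝ := fun t s =>
    max (C - nsq (s.1.1 i)) 0 + numTurns i t * alive (ball (r : ℝ)) i s with hF
  have hstep : ∀ t s, turn q (ball (r : ℝ)) (active n hn t) (F (t + 1)) s ≤ F t s := by
    intro t s
    by_cases hi : active n hn t = i
    · have hcount : (numTurns i (t + 1) : ℝ) = numTurns i t + 1 := by
        have : t % n = i := by rw [← hi]; rfl
        simp [numTurns, Nat.count_succ, this]
      rw [hi]
      by_cases hA : s.1.1 i ∈ ball (r : ℝ)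
      · rw [turn_of_mem hA]
        have hs := (mem_ball_iff r _).1 hA
        set x := s.1.1 i with hx
        have ha : |(x.1 : ℝ)| ≤ r :=
          abs_le_of_sq_le_sq (by unfold nsq at hs; nlinarith [sq_nonneg (x.2 : ℝ)])
            (Nat.cast_nonneg r)
        have hb : |(x.2 : ℝ)| ≤ r :=
          abs_le_of_sq_le_sq (by unfold nsq at hs; nlinarith [sq_nonneg (x.1 : ℝ)])
            (Nat.cast_nonneg r)
        rw [abs_le] at ha hb
        have bound : ∀ y : Z2, nsq y ≤ C →
            F (t + 1) (move s i y) ≤ C - nsq y + numTurns i t + 1 := by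
          intro y hy
          have h1 : (move s i y).1.1 i = y := Function.update_self _ _ _
          simp only [hF, h1, hcount]
          rw [max_eq_left (by linarith)]
          have : alive (ball (r : ℝ)) i (move s i y) ≤ 1 := by
            unfold alive; split_ifs <;> norm_num
          nlinarith [(Nat.cast_nonneg (numTurns i t) : (0 : ℝ) ≤ _)]
        have halive : alive (ball (r : ℝ)) i s = 1 := if_pos hA
        have hR : F t s = C - nsq x + numTurns i t := by
          simp only [hF, halive, ← hx]
          rw [max_eq_left (by rw [hC]; nlinarith [(Nat.cast_nonneg r : (0 : ℝ) ≤ r)])]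
          ring
        have e1 : nsq (x + (1, 0)) = nsq x + 2 * x.1 + 1 := by simp [nsq]; ring
        have e2 : nsq (x - (1, 0)) = nsq x - 2 * x.1 + 1 := by simp [nsq]; ring
        have e3 : nsq (x + (0, 1)) = nsq x + 2 * x.2 + 1 := by simp [nsq]; ring
        have e4 : nsq (x - (0, 1)) = nsq x - 2 * x.2 + 1 := by simp [nsq]; ring
        have b1 := bound (x + (1, 0)) (by rw [e1, hC]; nlinarith)
        have b2 := bound (x - (1, 0)) (by rw [e2, hC]; nlinarith)
        have b3 := bound (x + (0, 1)) (by rw [e3, hC]; nlinarith)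
        have b4 := bound (x - (0, 1)) (by rw [e4, hC]; nlinarith)
        have h0 := hprob_nonneg hq (s.1.2 x)
        have h1 := hprob_le_one hq (s.1.2 x)
        rw [hR]
        unfold avg
        rw [← hx]
        calc _ ≤ hprob q (s.1.2 x) / 2 * (2 * (C - nsq x + numTurns i t)) +
              (1 - hprob q (s.1.2 x)) / 2 * (2 * (C - nsq x + numTurns i t)) :=
              add_le_add (mul_le_mul_of_nonneg_left (by linarith) (by linarith))
                (mul_le_mul_of_nonneg_left (by linarith) (by linarith))
          _ = _ := by ring
      · rw [turn_of_notMem hA]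
        have : alive (ball (r : ℝ)) i s = 0 := if_neg hA
        simp [hF, this]
    · have hcount : numTurns i (t + 1) = numTurns i t := by
        have : ¬ t % n = i := fun h => hi (Fin.ext h)
        simp [numTurns, Nat.count_succ, this]
      have hconst : ∀ y, F (t + 1) (move s (active n hn t) y) = F t s := fun y => by
        have h1 : (move s (active n hn t) y).1.1 i = s.1.1 i :=
          Function.update_of_ne (Ne.symm hi) _ _
        have h2 : alive (ball (r : ℝ)) i (move s (active n hn t) y) = alive (ball (r : ℝ)) i s :=
          alive_congr h1
        simp only [hF, h1, h2, hcount]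
      unfold turn
      split_ifs
      · exact (avg_of_const hconst).le
      · simp only [hF, hcount, le_refl]
  have h := iter_le_of_super hq F hstep t (start n ρ)
  have h0 : F 0 (start n ρ) = C := by
    have : 0 ≤ C := by positivity
    simp [hF, numTurns, start, nsq, this]
  rw [h0] at h
  rw [← iter_mul]
  refine (iter_mono hq t (fun s => ?_) _).trans h
  simp only [hF]
  linarith [le_max_right (C - nsq (s.1.1 i)) 0]

lemma tendsto_iter_alive (hq : q ∈ Set.Ioc (0 : ℝ) 1) (hn : 0 < n) (r : ℕ) (i : Fin n)
    (ρ : Config) :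
    Tendsto (fun t => iter q (ball (r : ℝ)) hn t (alive (ball (r : ℝ)) i) (start n ρ))
      atTop (nhds 0) := by
  have h1 : Tendsto (fun t => ((r : ℝ) + 1) ^ 2 / (numTurns i t : ℝ)) atTop (nhds 0) :=
    tendsto_const_nhds.div_atTop (tendsto_natCast_atTop_atTop.comp (tendsto_numTurns hn i))
  refine squeeze_zero' (Eventually.of_forall fun t => ?_) ?_ h1
  · exact (iter_const t 0 _).symm.le.trans (iter_mono hq t (alive_nonneg i) _)
  · filter_upwards [(tendsto_numTurns hn i).eventually_gt_atTop 0] with t ht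
    rw [le_div_iff₀' (by exact_mod_cast ht)]
    exact iter_alive_le hq hn r i t ρ

lemma tendsto_sum_alive (hq : q ∈ Set.Ioc (0 : ℝ) 1) (hn : 0 < n) (r : ℕ) (ρ : Config) :
    Tendsto (fun t => ∑ i, iter q (ball (r : ℝ)) hn t (alive (ball (r : ℝ)) i) (start n ρ))
      atTop (nhds 0) := by
  simpa using tendsto_finsetSum (Finset.univ : Finset (Fin n))
    fun i _ => tendsto_iter_alive hq hn r i ρ

end Freezing

end HV
namespace HV

/-! ### The logarithmic potential -/

/-- The potential `log (2 |x|² - 1)`, which is superharmonic away from the origin and its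
neighbours.  At the origin the value is `log (-1) = 0`, thanks to the convention
`Real.log x = log |x|`. -/
noncomputable def pot (x : Z2) : ℝ := Real.log (2 * nsq x - 1)

/-- Half the second difference of the potential in the horizontal direction. -/
noncomputable def dH (x : Z2) : ℝ := (pot (x + (1, 0)) + pot (x - (1, 0))) / 2 - pot x

/-- Half the second difference of the potential in the vertical direction. -/
noncomputable def dV (x : Z2) : ℝ := (pot (x + (0, 1)) + pot (x - (0, 1))) / 2 - pot x

lemma one_le_nsq {x : Z2} (h : x ≠ (0, 0)) : 1 ≤ nsq x := by
  obtain ⟨a, b⟩ := x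
  have : 1 ≤ a ^ 2 + b ^ 2 := by
    by_contra! hc
    have ha : a = 0 := by nlinarith [sq_nonneg a, sq_nonneg b, sq_abs a, Int.one_le_abs (z := a)]
    have hb : b = 0 := by nlinarith [sq_nonneg a, sq_nonneg b, sq_abs b, Int.one_le_abs (z := b)]
    exact h (by rw [ha, hb])
  unfold nsq
  exact_mod_cast this

lemma pot_zero : pot (0, 0) = 0 := by simp [pot, nsq]

lemma pot_nonneg (x : Z2) : 0 ≤ pot x := by
  by_cases h : x = (0, 0)
  · rw [h, pot_zero]
  · exact Real.log_nonneg (by linarith [one_le_nsq h])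

lemma pot_swap (x : Z2) : pot x.swap = pot x := by
  simp only [pot, nsq, Prod.fst_swap, Prod.snd_swap]; rw [add_comm]

lemma dV_swap (x : Z2) : dV x.swap = dH x := by
  have h1 : x.swap + (0, 1) = (x + (1, 0)).swap := rfl
  have h2 : x.swap - (0, 1) = (x - (1, 0)).swap := rfl
  rw [dV, dH, h1, h2, pot_swap, pot_swap, pot_swap]

/-- The product behind the sum of two opposite neighbours, in either direction `c`. -/
lemma log_add_log_neighbors {S c : ℝ} (h1 : 0 < 2 * S + 1 + 4 * c) (h2 : 0 < 2 * S + 1 - 4 * c) :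
    Real.log (2 * S + 1 + 4 * c) + Real.log (2 * S + 1 - 4 * c) =
      Real.log ((2 * S + 1) ^ 2 - 16 * c ^ 2) := by
  rw [← Real.log_mul h1.ne' h2.ne']; congr 1; ring

lemma pot_up (x : Z2) : pot (x + (0, 1)) = Real.log (2 * nsq x + 1 + 4 * x.2) := by
  simp only [pot, nsq, Prod.fst_add, Prod.snd_add]; push_cast; congr 1; ring

lemma pot_down (x : Z2) : pot (x - (0, 1)) = Real.log (2 * nsq x + 1 - 4 * x.2) := by
  simp only [pot, nsq, Prod.fst_sub, Prod.snd_sub]; push_cast; congr 1; ring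

lemma pot_right (x : Z2) : pot (x + (1, 0)) = Real.log (2 * nsq x + 1 + 4 * x.1) := by
  simp only [pot, nsq, Prod.fst_add, Prod.snd_add]; push_cast; congr 1; ring

lemma pot_left (x : Z2) : pot (x - (1, 0)) = Real.log (2 * nsq x + 1 - 4 * x.1) := by
  simp only [pot, nsq, Prod.fst_sub, Prod.snd_sub]; push_cast; congr 1; ring

/-- The vertical second difference is nonnegative where `|x.2| ≤ |x.1|`. -/
lemma dV_nonneg {x : Z2} (h : |x.2| ≤ |x.1|) : 0 ≤ dV x := by
  by_cases hx : x = (0, 0)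
  · subst hx; norm_num [dV, pot, nsq]
  have h' : (x.2 : ℝ) ^ 2 ≤ (x.1 : ℝ) ^ 2 := by exact_mod_cast sq_le_sq.2 h
  have h1 := one_le_nsq hx
  set b : ℝ := (x.2 : ℝ)
  have hb : 2 * b ^ 2 ≤ nsq x := by unfold nsq; linarith
  have hp : 0 < 2 * nsq x + 1 + 4 * b := by nlinarith [sq_nonneg (b + 1 / 2), sq_nonneg (2 * b + 1)]
  have hm : 0 < 2 * nsq x + 1 - 4 * b := by nlinarith [sq_nonneg (b - 1 / 2), sq_nonneg (2 * b - 1)]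
  have : 2 * Real.log (2 * nsq x - 1) ≤ Real.log ((2 * nsq x + 1) ^ 2 - 16 * b ^ 2) := by
    rw [← Real.log_rpow (by linarith)]
    refine Real.log_le_log (Real.rpow_pos_of_pos (by linarith) _) ?_
    rw [Real.rpow_ofNat]
    nlinarith
  rw [dV, pot_up, pot_down, log_add_log_neighbors hp hm, pot]
  linarith

/-- Superharmonicity of the potential off the origin and its neighbours. -/
lemma dH_add_dV_nonpos {x : Z2} (h : 2 ≤ nsq x) : dH x + dV x ≤ 0 := by
  have hS : nsq x = (x.1 : ℝ) ^ 2 + (x.2 : ℝ) ^ 2 := rfl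
  have pos : ∀ e : Z2, nsq e = 1 → 0 < 2 * nsq (x + e) - 1 := fun e he => by
    have hne : x + e ≠ (0, 0) := fun h0 => by
      have : x = -e := eq_neg_of_add_eq_zero_left h0
      have : nsq x = 1 := by rw [this, ← he]; simp [nsq]
      linarith
    linarith [one_le_nsq hne]
  have p1 : 0 < 2 * nsq x + 1 + 4 * x.1 := by
    have := pos (1, 0) (by simp [nsq]); simp [nsq] at this ⊢; linarith
  have p2 : 0 < 2 * nsq x + 1 - 4 * x.1 := by
    have := pos (-1, 0) (by simp [nsq]); simp [nsq] at this ⊢; linarith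
  have p3 : 0 < 2 * nsq x + 1 + 4 * x.2 := by
    have := pos (0, 1) (by simp [nsq]); simp [nsq] at this ⊢; linarith
  have p4 : 0 < 2 * nsq x + 1 - 4 * x.2 := by
    have := pos (0, -1) (by simp [nsq]); simp [nsq] at this ⊢; linarith
  set S := nsq x
  set a : ℝ := (x.1 : ℝ)
  set b : ℝ := (x.2 : ℝ)
  have P : 0 < (2 * S + 1) ^ 2 - 16 * a ^ 2 := by nlinarith [mul_pos p1 p2]
  have Q : 0 < (2 * S + 1) ^ 2 - 16 * b ^ 2 := by nlinarith [mul_pos p3 p4]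
  -- Arithmetic-geometric mean inequality: the two factors have mean exactly `(2S - 1)²`.
  have key : Real.log ((2 * S + 1) ^ 2 - 16 * a ^ 2) + Real.log ((2 * S + 1) ^ 2 - 16 * b ^ 2) ≤
      4 * Real.log (2 * S - 1) := by
    rw [← Real.log_mul P.ne' Q.ne', ← Real.log_rpow (by linarith)]
    refine Real.log_le_log (mul_pos P Q) ?_
    rw [Real.rpow_ofNat]
    have hm : (2 * S + 1) ^ 2 - 16 * a ^ 2 + ((2 * S + 1) ^ 2 - 16 * b ^ 2) =
        2 * (2 * S - 1) ^ 2 := by rw [hS]; ring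
    calc _ ≤ (((2 * S + 1) ^ 2 - 16 * a ^ 2 + ((2 * S + 1) ^ 2 - 16 * b ^ 2)) / 2) ^ 2 := by
          linarith [sq_nonneg (((2 * S + 1) ^ 2 - 16 * a ^ 2) - ((2 * S + 1) ^ 2 - 16 * b ^ 2))]
      _ = _ := by rw [hm]; ring
  rw [dH, dV, pot_up, pot_down, pot_left, pot_right]
  have e1 := log_add_log_neighbors p1 p2
  have e2 := log_add_log_neighbors p3 p4
  have e3 : pot x = Real.log (2 * S - 1) := rfl
  linarith

/-- The reward per return to the origin that compensates for the failure of superharmonicity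
at the neighbours of the origin. -/
noncomputable def reward : ℝ := Real.log 63

open Classical in
/-- The potential at `y`, minus the reward if the step from `x` to `y` is a return. -/
noncomputable def potR (x y : Z2) : ℝ :=
  pot y - if x ≠ (0, 0) ∧ y = (0, 0) then reward else 0

lemma reward_nonneg : 0 ≤ reward := Real.log_nonneg (by norm_num)

lemma potR_le (x y : Z2) : potR x y ≤ pot y := by
  unfold potR
  split_ifs <;> linarith [reward_nonneg]

/-- A bound for the vertical drift whose negative bounds the horizontal drift.  In either region
it is determined by the direction whose second difference is nonnegative, which makes its total
variation computable by telescoping. -/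
noncomputable def tilt (x : Z2) : ℝ := if |x.2| ≤ |x.1| then dV x else -dH x

lemma dV_origin : dV (0, 0) = 0 := by norm_num [dV, pot, nsq]
lemma dH_origin : dH (0, 0) = 0 := by norm_num [dH, pot, nsq]

/-- The horizontal drift including rewards, for `|x.2| ≤ |x.1|`. -/
lemma potR_horizontal_le (x : Z2) (h : |x.2| ≤ |x.1|) :
    (potR x (x + (1, 0)) + potR x (x - (1, 0))) / 2 - pot x ≤ -dV x := by
  by_cases h2 : 2 ≤ nsq x
  · have := dH_add_dV_nonpos h2
    unfold dH at this
    linarith [potR_le x (x + (1, 0)), potR_le x (x - (1, 0))]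
  by_cases h0 : x = (0, 0)
  · subst h0
    rw [dV_origin]
    norm_num [potR, pot, nsq]
  · obtain ⟨a, b⟩ := x
    have hn : a ^ 2 + b ^ 2 < 2 := by
      unfold nsq at h2; push Not at h2; exact_mod_cast h2
    simp only at h
    have hba : b ^ 2 ≤ a ^ 2 := sq_le_sq.2 h
    have hb : b = 0 := by
      by_contra hb; nlinarith [Int.one_le_abs hb, sq_abs b]
    subst hb
    have ha : a = 1 ∨ a = -1 := by
      have : a ≠ 0 := fun e => h0 (by rw [e])
      have h1 : a < 2 := by nlinarith
      have h2 : -2 < a := by nlinarith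
      omega
    have l3 : Real.log 63 = Real.log 3 + Real.log 3 + Real.log 7 := by
      rw [← Real.log_mul (by norm_num) (by norm_num), ← Real.log_mul (by norm_num) (by norm_num)]
      norm_num
    rcases ha with rfl | rfl <;>
    · norm_num [potR, pot, nsq, dV, reward, Prod.ext_iff]
      linarith

lemma potR_swap (x y : Z2) : potR x.swap y.swap = potR x y := by
  have : ∀ z : Z2, z.swap = (0, 0) ↔ z = (0, 0) := fun z => by
    simp [Prod.ext_iff, and_comm]
  simp only [potR, pot_swap, ne_eq, this]

/-- The horizontal drift including rewards; rewards are needed only next to the origin. -/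
lemma potR_H_le (x : Z2) :
    (potR x (x + (1, 0)) + potR x (x - (1, 0))) / 2 - pot x ≤ -tilt x := by
  unfold tilt
  split_ifs with h
  · exact potR_horizontal_le x h
  · unfold dH
    linarith [potR_le x (x + (1, 0)), potR_le x (x - (1, 0))]

lemma potR_V_le (x : Z2) :
    (potR x (x + (0, 1)) + potR x (x - (0, 1))) / 2 - pot x ≤ tilt x := by
  unfold tilt
  split_ifs with h
  · unfold dV
    linarith [potR_le x (x + (0, 1)), potR_le x (x - (0, 1))]
  · have := potR_horizontal_le x.swap (by simpa using (not_le.1 h).le)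
    have h1 : x.swap + (1, 0) = (x + (0, 1)).swap := rfl
    have h2 : x.swap - (1, 0) = (x - (0, 1)).swap := rfl
    rwa [h1, h2, potR_swap, potR_swap, pot_swap, dV_swap] at this

/-! ### The total variation of the labels -/

/-- The lattice square `[-r, r]²`. -/
noncomputable def box (r : ℕ) : Finset Z2 := Finset.Icc (-(r : ℤ)) r ×ˢ Finset.Icc (-(r : ℤ)) r

lemma mem_box_of_mem_ball {r : ℕ} {x : Z2} (h : x ∈ ball (r : ℝ)) : x ∈ box r := by
  have h := (mem_ball_iff r x).1 h
  have h' : x.1 ^ 2 + x.2 ^ 2 < (r : ℤ) ^ 2 := by unfold nsq at h; exact_mod_cast h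
  have h1 := abs_le.1 (abs_le_of_sq_le_sq (a := x.1) (b := (r : ℤ))
    (by nlinarith [sq_nonneg x.2]) (Int.natCast_nonneg r))
  have h2 := abs_le.1 (abs_le_of_sq_le_sq (a := x.2) (b := (r : ℤ))
    (by nlinarith [sq_nonneg x.1]) (Int.natCast_nonneg r))
  simp [box, h1, h2]

lemma sum_Icc_succ (φ : ℤ → ℝ) (m : ℕ) :
    ∑ b ∈ Finset.Icc (-((m + 1 : ℕ) : ℤ)) (m + 1 : ℕ), φ b =
      ∑ b ∈ Finset.Icc (-(m : ℤ)) m, φ b + φ (m + 1) + φ (-(m + 1)) := by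
  have : Finset.Icc (-((m + 1 : ℕ) : ℤ)) (m + 1 : ℕ) =
      insert (-(m + 1) : ℤ) (insert (m + 1 : ℤ) (Finset.Icc (-(m : ℤ)) m)) := by
    ext b; simp only [Finset.mem_Icc, Finset.mem_insert]; omega
  rw [this, Finset.sum_insert, Finset.sum_insert]
  · ring
  · simp only [Finset.mem_Icc]; omega
  · simp only [Finset.mem_Icc, Finset.mem_insert]; omega

/-- Second differences telescope along a column. -/
lemma sum_dV_column (a : ℤ) (m : ℕ) :
    ∑ b ∈ Finset.Icc (-(m : ℤ)) m, dV (a, b) = pot (a, m + 1) - pot (a, m) := by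
  have even : ∀ b : ℤ, pot (a, -b) = pot (a, b) := fun b => by simp [pot, nsq]
  induction m with
  | zero =>
    have := even 1
    simp [dV] at this ⊢
    rw [this]; ring
  | succ m ih =>
    rw [sum_Icc_succ, ih]
    have e0 := even (m + 1)
    have e1 := even m
    have e2 := even (m + 2)
    have h1 : dV (a, (m : ℤ) + 1) =
        (pot (a, (m : ℤ) + 2) + pot (a, (m : ℤ))) / 2 - pot (a, (m : ℤ) + 1) := by
      simp only [dV, Prod.mk_add_mk, Prod.mk_sub_mk, add_zero, sub_zero, add_sub_cancel_right,
        add_assoc, one_add_one_eq_two]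
    have h2 : dV (a, -((m : ℤ) + 1)) =
        (pot (a, (m : ℤ)) + pot (a, (m : ℤ) + 2)) / 2 - pot (a, (m : ℤ) + 1) := by
      rw [← e0, ← e1, ← e2]
      simp only [dV, Prod.mk_add_mk, Prod.mk_sub_mk, add_zero, sub_zero]
      congr 5; ring
    rw [h1, h2]
    push_cast
    rw [add_assoc (m : ℤ) 1 1, one_add_one_eq_two]
    ring

/-- The column sum between the diagonals has a closed form that telescopes in turn. -/
lemma pot_diag (m : ℕ) (a : ℤ) (h : |a| = m) :
    pot (a, m + 1) - pot (a, m) = Real.log (2 * m + 1) - Real.log (2 * m - 1) := by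
  have ha : (a : ℝ) ^ 2 = (m : ℝ) ^ 2 := by
    have : a ^ 2 = (m : ℤ) ^ 2 := by rw [← sq_abs, h]
    exact_mod_cast this
  have h1 : (2 * (m : ℝ) + 1) ≠ 0 := by positivity
  have h2 : (2 * (m : ℝ) - 1) ≠ 0 := by
    intro e
    have : (2 * (m : ℤ) - 1) = 0 := by exact_mod_cast e
    omega
  have e1 : 2 * nsq (a, (m : ℤ) + 1) - 1 = (2 * m + 1) * (2 * m + 1) := by
    simp only [nsq]; push_cast; rw [ha]; ring
  have e2 : 2 * nsq (a, (m : ℤ)) - 1 = (2 * m + 1) * (2 * m - 1) := by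
    simp only [nsq]; push_cast; rw [ha]; ring
  rw [pot, pot, e1, e2, Real.log_mul h1 h1, Real.log_mul h1 h2]
  ring

/-- The vertical second difference, restricted to the horizontal sectors. -/
noncomputable def sector (a b : ℤ) : ℝ := if |b| ≤ |a| then dV (a, b) else 0

lemma sector_nonneg (a b : ℤ) : 0 ≤ sector a b := by
  unfold sector
  split_ifs with h
  · exact dV_nonneg h
  · exact le_rfl

lemma abs_tilt_le (x : Z2) : |tilt x| ≤ sector x.1 x.2 + sector x.2 x.1 := by
  obtain ⟨a, b⟩ := x
  unfold tilt
  split_ifs with h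
  · rw [abs_of_nonneg (dV_nonneg h)]
    have : sector a b = dV (a, b) := if_pos h
    linarith [sector_nonneg b a]
  · have h' : |a| ≤ |b| := (not_le.1 h).le
    have e : dH (a, b) = dV (b, a) := (dV_swap (a, b)).symm
    rw [abs_neg, e, abs_of_nonneg (dV_nonneg h')]
    have : sector b a = dV (b, a) := if_pos h'
    linarith [sector_nonneg a b]

lemma sum_sector_column {r : ℕ} (m : ℕ) (a : ℤ) (h : |a| = m) (hm : m ≤ r) :
    ∑ b ∈ Finset.Icc (-(r : ℤ)) r, sector a b =
      Real.log (2 * m + 1) - Real.log (2 * m - 1) := by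
  rw [← pot_diag m a h, ← sum_dV_column]
  unfold sector
  rw [← Finset.sum_filter]
  congr 1
  ext b
  simp only [Finset.mem_filter, Finset.mem_Icc, h, abs_le]
  omega

lemma sum_sector (r m : ℕ) (hm : m ≤ r) :
    ∑ a ∈ Finset.Icc (-(m : ℤ)) m, ∑ b ∈ Finset.Icc (-(r : ℤ)) r, sector a b =
      2 * Real.log (2 * m + 1) := by
  induction m with
  | zero =>
    have := sum_sector_column (r := r) 0 0 (by simp) (Nat.zero_le r)
    simp at this ⊢
    exact this
  | succ m ih =>
    have hm1 : |(m : ℤ) + 1| = ((m + 1 : ℕ) : ℤ) := by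
      rw [abs_of_nonneg (by omega)]; push_cast; ring
    rw [sum_Icc_succ, ih (by omega), sum_sector_column (m + 1) ((m : ℤ) + 1) hm1 hm,
      sum_sector_column (m + 1) (-((m : ℤ) + 1)) (by rw [abs_neg, hm1]) hm]
    have : (2 * ((m + 1 : ℕ) : ℝ) - 1) = 2 * m + 1 := by push_cast; ring
    rw [this]
    ring

lemma sum_abs_tilt_le (r : ℕ) : ∑ x ∈ box r, |tilt x| ≤ 4 * Real.log (2 * r + 1) := by
  calc ∑ x ∈ box r, |tilt x| ≤ ∑ x ∈ box r, (sector x.1 x.2 + sector x.2 x.1) :=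
        Finset.sum_le_sum fun x _ => abs_tilt_le x
    _ = ∑ a ∈ Finset.Icc (-(r : ℤ)) r, ∑ b ∈ Finset.Icc (-(r : ℤ)) r, sector a b +
        ∑ a ∈ Finset.Icc (-(r : ℤ)) r, ∑ b ∈ Finset.Icc (-(r : ℤ)) r, sector b a := by
      rw [Finset.sum_add_distrib, box, Finset.sum_product, Finset.sum_product]
    _ = _ := by
      rw [Finset.sum_comm (f := fun a b => sector b a), sum_sector r r le_rfl]; ring

end HV
namespace HV

/-! ### The supermartingale and the lower bound -/

/-- The contribution of label `b` at `x` to the supermartingale.  Only the difference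
`labelPot q x false - labelPot q x true = (1 - 2q) / q * tilt x` matters; the two values are
chosen nonnegative. -/
noncomputable def labelPot (q : ℝ) (x : Z2) (b : Bool) : ℝ :=
  if b then max (-((1 - 2 * q) / q * tilt x)) 0 else max ((1 - 2 * q) / q * tilt x) 0

lemma labelPot_nonneg (q : ℝ) (x : Z2) (b : Bool) : 0 ≤ labelPot q x b := by
  unfold labelPot; split_ifs <;> exact le_max_right _ _

lemma labelPot_sub (q : ℝ) (x : Z2) :
    labelPot q x false - labelPot q x true = (1 - 2 * q) / q * tilt x := by
  simp only [labelPot, if_true, Bool.false_eq_true, if_false]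
  rcases le_total 0 ((1 - 2 * q) / q * tilt x) with h | h
  · rw [max_eq_left h, max_eq_right (by linarith)]; ring
  · rw [max_eq_right h, max_eq_left (by linarith)]; ring

lemma labelPot_le {q : ℝ} (hq : q ∈ Set.Ioc (0 : ℝ) 1) (x : Z2) (b : Bool) :
    labelPot q x b ≤ |1 - 2 * q| / q * |tilt x| := by
  have : |1 - 2 * q| / q * |tilt x| = |(1 - 2 * q) / q * tilt x| := by
    rw [abs_mul, abs_div, abs_of_pos hq.1]
  rw [this]
  unfold labelPot
  split_ifs
  · exact max_le (neg_le_abs _) (abs_nonneg _)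
  · exact max_le (le_abs_self _) (abs_nonneg _)

/-- The supermartingale before the `k`-th return: potentials of the walkers, label
contributions, and a reward for each of the remaining returns. -/
noncomputable def energy {n : ℕ} (q : ℝ) (r k : ℕ) (s : AState n) : ℝ :=
  ∑ i, pot (s.1.1 i) + ∑ x ∈ box r, labelPot q x (s.1.2 x) + reward * (k - s.2)

open Classical in
/-- The energy, replaced by zero once `k` returns have occurred. -/
noncomputable def energyStop {n : ℕ} (q : ℝ) (r k : ℕ) (s : AState n) : ℝ :=
  if k ≤ s.2 then 0 else energy q r k s

section Energy

variable {n : ℕ} {q : ℝ} {r k : ℕ}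

lemma energyStop_le_energy {s : AState n} (h : s.2 ≤ k) : energyStop q r k s ≤ energy q r k s := by
  unfold energyStop
  split_ifs
  · have h1 : 0 ≤ ∑ i, pot (s.1.1 i) := Finset.sum_nonneg fun i _ => pot_nonneg _
    have h2 : 0 ≤ ∑ x ∈ box r, labelPot q x (s.1.2 x) :=
      Finset.sum_nonneg fun x _ => labelPot_nonneg _ _ _
    have h3 : (0 : ℝ) ≤ k - s.2 := by simpa using h
    have := mul_nonneg reward_nonneg h3
    unfold energy; linarith
  · exact le_rfl

lemma energyStop_nonneg (s : AState n) : 0 ≤ energyStop q r k s := by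
  by_cases h : k ≤ s.2
  · exact (if_pos h).symm.le
  · have h' : s.2 ≤ k := (not_le.1 h).le
    have h1 : 0 ≤ ∑ i, pot (s.1.1 i) := Finset.sum_nonneg fun i _ => pot_nonneg _
    have h2 : 0 ≤ ∑ x ∈ box r, labelPot q x (s.1.2 x) :=
      Finset.sum_nonneg fun x _ => labelPot_nonneg _ _ _
    have h3 : (0 : ℝ) ≤ k - s.2 := by simpa using h'
    have h4 := mul_nonneg reward_nonneg h3
    have e : energyStop q r k s = energy q r k s := if_neg h
    rw [e]; unfold energy; linarith

lemma energy_move {s : AState n} {i : Fin n} (hx : s.1.1 i ∈ box r) (y : Z2) :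
    energy q r k (move s i y) = energy q r k s + (potR (s.1.1 i) y - pot (s.1.1 i)) +
      (labelPot q (s.1.1 i) (if y.2 = (s.1.1 i).2 then true else false) -
        labelPot q (s.1.1 i) (s.1.2 (s.1.1 i))) := by
  set b : Bool := if y.2 = (s.1.1 i).2 then true else false with hb
  have h1 : ∑ j, pot ((move s i y).1.1 j) = ∑ j, pot (s.1.1 j) + (pot y - pot (s.1.1 i)) := by
    rw [← sub_eq_iff_eq_add', ← Finset.sum_sub_distrib, Finset.sum_eq_single i]
    · simp [move, apply']
    · intro j _ hj; simp [move, apply', Function.update_of_ne hj]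
    · simp
  have h2 : ∑ x ∈ box r, labelPot q x ((move s i y).1.2 x) =
      ∑ x ∈ box r, labelPot q x (s.1.2 x) +
        (labelPot q (s.1.1 i) b - labelPot q (s.1.1 i) (s.1.2 (s.1.1 i))) := by
    rw [← sub_eq_iff_eq_add', ← Finset.sum_sub_distrib, Finset.sum_eq_single (s.1.1 i)]
    · simp [move, apply', hb]
    · intro x _ hx'; simp [move, apply', Function.update_of_ne hx']
    · exact fun h => absurd hx h
  have h3 : (((move s i y).2 : ℕ) : ℝ) =
      s.2 + if s.1.1 i ≠ (0, 0) ∧ y = (0, 0) then 1 else 0 := by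
    simp only [move]; split_ifs <;> push_cast <;> ring
  rw [energy, h1, h2, h3, energy, potR]
  split_ifs <;> ring

/-- The supermartingale property.  Resampling a label `l` to `H` with probability `p` makes the
potentials drift by at most `(1 - 2p) * tilt x`; this is cancelled by the expected change of the
label contribution at `x`, because `p` is `1 - q` or `q` according to `l`. -/
lemma turn_energyStop_le (hq : q ∈ Set.Ioc (0 : ℝ) 1) (i : Fin n) (s : AState n) :
    turn q (ball (r : ℝ)) i (energyStop q r k) s ≤ energyStop q r k s := by
  by_cases hA : s.1.1 i ∈ ball (r : ℝ)
  swap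
  · rw [turn_of_notMem hA]
  rw [turn_of_mem hA]
  by_cases hk : k ≤ s.2
  · rw [avg_of_const (c := 0) fun y => if_pos (hk.trans (Nat.le_add_right _ _))]
    exact (if_pos hk).symm.le
  have hE : energyStop q r k s = energy q r k s := if_neg hk
  have hx := mem_box_of_mem_ball hA
  have hmove : ∀ y, energyStop q r k (move s i y) ≤ energy q r k (move s i y) := fun y =>
    energyStop_le_energy (by simp only [move]; split_ifs <;> omega)
  rw [hE]
  refine (avg_le_avg hq (G := energy q r k) rfl rfl hmove).trans ?_
  set x := s.1.1 i with hxdef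
  set l := s.1.2 x with hl
  have h0 := hprob_nonneg hq l
  have h1 := hprob_le_one hq l
  have e1 : (if (x + (1, 0)).2 = x.2 then true else false) = true := by simp
  have e2 : (if (x - (1, 0)).2 = x.2 then true else false) = true := by simp
  have e3 : (if (x + (0, 1)).2 = x.2 then true else false) = false := by simp
  have e4 : (if (x - (0, 1)).2 = x.2 then true else false) = false := by simp
  have m1 := energy_move (q := q) (k := k) hx (x + (1, 0))
  have m2 := energy_move (q := q) (k := k) hx (x - (1, 0))
  have m3 := energy_move (q := q) (k := k) hx (x + (0, 1))
  have m4 := energy_move (q := q) (k := k) hx (x - (0, 1))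
  rw [← hxdef] at m1 m2 m3 m4
  rw [e1] at m1; rw [e2] at m2; rw [e3] at m3; rw [e4] at m4
  have hH := potR_H_le x
  have hV := potR_V_le x
  have hd := labelPot_sub q x
  unfold avg
  rw [← hxdef, ← hl, m1, m2, m3, m4]
  set p := hprob q l with hp
  set H := (potR x (x + (1, 0)) + potR x (x - (1, 0))) / 2 - pot x with hHdef
  set V := (potR x (x + (0, 1)) + potR x (x - (0, 1))) / 2 - pot x with hVdef
  -- The drift, expressed through the horizontal drift `H` and the vertical drift `V`.
  suffices hs : p * (H + (labelPot q x true - labelPot q x l)) +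
      (1 - p) * (V + (labelPot q x false - labelPot q x l)) ≤ 0 by
    rw [hHdef, hVdef] at hs
    nlinarith [hs]
  set u := tilt x
  have hle : p * H + (1 - p) * V ≤ (1 - 2 * p) * u := by
    have a1 := mul_le_mul_of_nonneg_left hH h0
    have a2 := mul_le_mul_of_nonneg_left hV (sub_nonneg.2 h1)
    linarith
  have hq0 : q ≠ 0 := hq.1.ne'
  have hqd : q * (labelPot q x false - labelPot q x true) = (1 - 2 * q) * u := by
    rw [hd]; field_simp
  rcases Bool.eq_false_or_eq_true l with h | h
  · have hp' : p = 1 - q := by rw [hp, h]; rfl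
    rw [hp'] at hle
    rw [h, hp']
    linarith
  · have hp' : p = q := by rw [hp, h]; rfl
    rw [hp'] at hle
    rw [h, hp']
    linarith

lemma energyStop_start_le (hq : q ∈ Set.Ioc (0 : ℝ) 1) (ρ : Config) :
    energyStop q r k (start n ρ) ≤
      |1 - 2 * q| / q * (4 * Real.log (2 * r + 1)) + reward * k := by
  refine (energyStop_le_energy (Nat.zero_le k)).trans ?_
  have h1 : ∑ x ∈ box r, labelPot q x (ρ x) ≤ |1 - 2 * q| / q * (4 * Real.log (2 * r + 1)) := by
    refine (Finset.sum_le_sum fun x _ => labelPot_le hq x (ρ x)).trans ?_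
    rw [← Finset.mul_sum]
    exact mul_le_mul_of_nonneg_left (sum_abs_tilt_le r) (div_nonneg (abs_nonneg _) hq.1.le)
  simp only [energy, start, pot_zero, Finset.sum_const_zero, zero_add, Nat.cast_zero, sub_zero]
  linarith

lemma two_log_le_pot (hr : 1 ≤ r) {x : Z2} (h : x ∉ ball (r : ℝ)) : 2 * Real.log r ≤ pot x := by
  have h := not_lt.1 fun h' => h ((mem_ball_iff r x).2 h')
  have hr' : (1 : ℝ) ≤ r := by exact_mod_cast hr
  rw [← Real.log_rpow (by linarith), pot]
  refine Real.log_le_log (Real.rpow_pos_of_pos (by linarith) _) ?_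
  rw [Real.rpow_ofNat]
  nlinarith

/-- If fewer than `k` returns occurred and all `n` walkers are frozen, the energy is at least
`n * (2 * log r)`; Markov's inequality bounds the probability of this event. -/
lemma one_sub_le_iter_goal (hq : q ∈ Set.Ioc (0 : ℝ) 1) (hn : 0 < n) (hr : 2 ≤ r) (t : ℕ)
    (ρ : Config) :
    1 - (|1 - 2 * q| / q * (4 * Real.log (2 * r + 1)) + reward * k) / (n * (2 * Real.log r)) ≤
      iter q (ball (r : ℝ)) hn t (goal k) (start n ρ) +
        ∑ i, iter q (ball (r : ℝ)) hn t (alive (ball (r : ℝ)) i) (start n ρ) := by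
  have hlog : 0 < Real.log r := Real.log_pos (by exact_mod_cast hr)
  set M : ℝ := n * (2 * Real.log r) with hM
  have hMpos : 0 < M := by have : (0 : ℝ) < n := by exact_mod_cast hn
                           positivity
  have hpt : ∀ s : AState n, (1 : ℝ) ≤
      (goal k s + ∑ i, alive (ball (r : ℝ)) i s) + M⁻¹ * energyStop q r k s := by
    intro s
    have g1 : 0 ≤ M⁻¹ * energyStop q r k s :=
      mul_nonneg (inv_nonneg.2 hMpos.le) (energyStop_nonneg s)
    have g2 : 0 ≤ ∑ i, alive (ball (r : ℝ)) i s := Finset.sum_nonneg fun i _ => alive_nonneg i s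
    have g3 := goal_nonneg k s
    by_cases hk : k ≤ s.2
    · have : goal k s = 1 := if_pos hk
      linarith
    by_cases hA : ∃ i, s.1.1 i ∈ ball (r : ℝ)
    · obtain ⟨i, hi⟩ := hA
      linarith [one_le_sum_alive hi]
    push Not at hA
    have h1 : M ≤ ∑ i, pot (s.1.1 i) :=
      calc M = ∑ _i : Fin n, 2 * Real.log r := by simp [hM]
        _ ≤ _ := Finset.sum_le_sum fun i _ => two_log_le_pot (by omega) (hA i)
    have h2 : 0 ≤ ∑ x ∈ box r, labelPot q x (s.1.2 x) :=
      Finset.sum_nonneg fun x _ => labelPot_nonneg _ _ _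
    have h3 : (0 : ℝ) ≤ k - s.2 := by simpa using (not_le.1 hk).le
    have h4 := mul_nonneg reward_nonneg h3
    have hE : energyStop q r k s = energy q r k s := if_neg hk
    have : 1 ≤ M⁻¹ * energyStop q r k s := by
      rw [hE, ← div_eq_inv_mul, le_div_iff₀ hMpos]
      unfold energy; linarith
    linarith
  have h := iter_mono (A := ball (r : ℝ)) (hn := hn) hq t hpt (start n ρ)
  rw [iter_const, iter_add, iter_mul, iter_add, iter_sum] at h
  have hG : iter q (ball (r : ℝ)) hn t (energyStop q r k) (start n ρ) ≤ _ :=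
    (iter_le_of_super hq (fun _ => energyStop q r k)
      (fun t s => turn_energyStop_le hq _ s) t (start n ρ)).trans (energyStop_start_le hq ρ)
  have := mul_le_mul_of_nonneg_left hG (inv_nonneg.2 hMpos.le)
  rw [← div_eq_inv_mul, ← div_eq_inv_mul] at this
  rw [← div_eq_inv_mul] at h
  linarith

end Energy

end HV
namespace HV

/-! ### The frozen walk -/

section Law

variable {n : ℕ} {hn : 0 < n} {q : ℝ} {r : ℕ} {ρ : Config}

/-- The state of the frozen walk at time `t` together with the number of returns. -/
noncomputable def aug (n : ℕ) (hn : 0 < n) (r : ℕ) (ρ : Config) (y : Path) (t : ℕ) : AState n :=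
  (fseq n hn r ρ y t, returns n (fun u => fseq n hn r ρ y u) t)

open Classical in
/-- The deterministic effect on a state of walker `i` having its turn with target `z`. -/
noncomputable def fmove (r : ℕ) (s : AState n) (i : Fin n) (z : Z2) : AState n :=
  if s.1.1 i ∈ bdry (r : ℝ) then s else move s i z

lemma aug_zero (y : Path) : aug n hn r ρ y 0 = start n ρ := by
  simp [aug, start, fseq, returns]

open Classical in
lemma returns_succ (S : ℕ → State n) (t : ℕ) :
    returns n S (t + 1) = returns n S t +
      if ∃ i, (S t).1 i ≠ (0, 0) ∧ (S (t + 1)).1 i = (0, 0) then 1 else 0 := by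
  unfold returns
  have : Finset.Icc 1 (t + 1) = insert (t + 1) (Finset.Icc 1 t) := by
    ext s; simp only [Finset.mem_Icc, Finset.mem_insert]; omega
  rw [this, Finset.filter_insert, Nat.add_sub_cancel]
  split_ifs with h
  · rw [Finset.card_insert_of_notMem]
    simp
  · rfl

lemma aug_succ (y : Path) (t : ℕ) :
    aug n hn r ρ y (t + 1) = fmove r (aug n hn r ρ y t) (active n hn t) (y t) := by
  classical
  have hS : fseq n hn r ρ y (t + 1) =
    fapply n r (fseq n hn r ρ y t) (active n hn t) (y t) := rfl
  set s := fseq n hn r ρ y t with hs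
  set i := active n hn t
  have hret := returns_succ (fun u => fseq n hn r ρ y u) t
  simp only [hS, ← hs] at hret
  by_cases hb : s.1 i ∈ bdry (r : ℝ)
  · have e : fapply n r s i (y t) = s := if_pos hb
    rw [e, if_neg (by rintro ⟨j, h1, h2⟩; exact h1 h2)] at hret
    have : fmove r (aug n hn r ρ y t) i (y t) = aug n hn r ρ y t := if_pos hb
    rw [this]
    unfold aug
    rw [hret, hS, e]; rfl
  · have e : fapply n r s i (y t) = apply' n s i (y t) := if_neg hb
    rw [e] at hret
    have : fmove r (aug n hn r ρ y t) i (y t) = move (aug n hn r ρ y t) i (y t) := if_neg hb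
    rw [this]
    have hiff : (∃ j, s.1 j ≠ (0, 0) ∧ (apply' n s i (y t)).1 j = (0, 0)) ↔
        (s.1 i ≠ (0, 0) ∧ y t = (0, 0)) := by
      constructor
      · rintro ⟨j, h1, h2⟩
        by_cases hj : j = i
        · subst hj; exact ⟨h1, by simpa [apply'] using h2⟩
        · exact absurd (by simpa [apply', Function.update_of_ne hj] using h2) h1
      · rintro ⟨h1, h2⟩
        exact ⟨i, h1, by simpa [apply'] using h2⟩
    unfold aug move
    rw [hret, hS, e]
    refine Prod.ext rfl ?_
    simp only [hiff, ← hs]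

lemma aug_congr {y y' : Path} (t : ℕ) (h : ∀ s < t, y s = y' s) :
    aug n hn r ρ y t = aug n hn r ρ y' t := by
  induction t with
  | zero => rw [aug_zero, aug_zero]
  | succ t ih =>
    rw [aug_succ, aug_succ, ih fun s hs => h s (by omega), h t (by omega)]

lemma fseq_congr {y y' : Path} (t : ℕ) (h : ∀ s < t, y s = y' s) :
    fseq n hn r ρ y t = fseq n hn r ρ y' t :=
  congrArg Prod.fst (aug_congr t h)

/-- All walkers are inside the ball or on its boundary. -/
def Good (r : ℕ) (s : State n) : Prop := ∀ i, s.1 i ∈ ball (r : ℝ) ∨ s.1 i ∈ bdry (r : ℝ)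

lemma not_mem_ball_of_mem_bdry {x : Z2} (h : x ∈ bdry (r : ℝ)) : x ∉ ball (r : ℝ) := h.1

lemma mem_of_adj {x y : Z2} (hx : x ∈ ball (r : ℝ)) (h : adj y x) :
    y ∈ ball (r : ℝ) ∨ y ∈ bdry (r : ℝ) := by
  by_cases hy : y ∈ ball (r : ℝ)
  · exact Or.inl hy
  · exact Or.inr ⟨hy, x, h, hx⟩

lemma adj_of_weight_ne_zero {s : State n} {i : Fin n} {y : Z2} (h : weight q n s i y ≠ 0) :
    adj y (s.1 i) := by
  by_cases h1 : y = s.1 i + (1, 0) ∨ y = s.1 i - (1, 0)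
  · rcases h1 with rfl | rfl <;> simp [adj]
  by_cases h2 : y = s.1 i + (0, 1) ∨ y = s.1 i - (0, 1)
  · rcases h2 with rfl | rfl <;> simp [adj]
  exact absurd (by unfold weight; rw [if_neg h1, if_neg h2]) h

/-- Trajectories of positive probability stay inside the ball and its boundary. -/
lemma good_of_prod_ne_zero (hr : 1 ≤ r) (c : Path) (t : ℕ)
    (h : ∏ s ∈ Finset.range t, fweight q n r (fseq n hn r ρ c s) (active n hn s) (c s) ≠ 0) :
    Good r (fseq n hn r ρ c t) := by
  induction t with
  | zero =>
    intro i
    left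
    rw [mem_ball_iff]
    have : (1 : ℝ) ≤ r := by exact_mod_cast hr
    show nsq (0, 0) < (r : ℝ) ^ 2
    simp only [nsq]
    push_cast
    nlinarith
  | succ t ih =>
    rw [Finset.prod_range_succ] at h
    have hg := ih (left_ne_zero_of_mul h)
    have hw := right_ne_zero_of_mul h
    show Good r (fapply n r (fseq n hn r ρ c t) (active n hn t) (c t))
    set s := fseq n hn r ρ c t
    set i := active n hn t
    by_cases hb : s.1 i ∈ bdry (r : ℝ)
    · have : fapply n r s i (c t) = s := if_pos hb
      rwa [this]
    · have e : fapply n r s i (c t) = apply' n s i (c t) := if_neg hb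
      have e' : fweight q n r s i (c t) = weight q n s i (c t) := if_neg hb
      rw [e'] at hw
      rw [e]
      intro j
      by_cases hj : j = i
      · subst hj
        have := mem_of_adj ((hg i).resolve_right hb) (adj_of_weight_ne_zero hw)
        simpa [apply'] using this
      · simpa [apply', Function.update_of_ne hj] using hg j

/-- The transition probabilities integrate `F` to `turn F`. -/
lemma tsum_fweight (hq : q ∈ Set.Ioc (0 : ℝ) 1) {F : AState n → ℝ} (hF : ∀ s, 0 ≤ F s)
    {s : AState n} (hg : Good r s.1) (i : Fin n) :
    ∑' z, ENNReal.ofReal (F (fmove r s i z)) * fweight q n r s.1 i z =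
      ENNReal.ofReal (turn q (ball (r : ℝ)) i F s) := by
  by_cases hb : s.1.1 i ∈ bdry (r : ℝ)
  · have e1 : ∀ z, fmove r s i z = s := fun z => if_pos hb
    have e2 : ∀ z, fweight q n r s.1 i z = if z = s.1.1 i then 1 else 0 := fun z => if_pos hb
    rw [turn_of_notMem (not_mem_ball_of_mem_bdry hb), tsum_eq_single (s.1.1 i)]
    · rw [e1, e2, if_pos rfl, mul_one]
    · intro z hz; rw [e2, if_neg hz, mul_zero]
  · have e1 : ∀ z, fmove r s i z = move s i z := fun z => if_neg hb
    have e2 : ∀ z, fweight q n r s.1 i z = weight q n s.1 i z := fun z => if_neg hb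
    rw [turn_of_mem ((hg i).resolve_right hb)]
    simp only [e1, e2]
    set x := s.1.1 i with hx
    have h0 := hprob_nonneg hq (s.1.2 x)
    have h1 := hprob_le_one hq (s.1.2 x)
    have n12 : x + (1, 0) ≠ x - (1, 0) := fun h => by
      have := congrArg Prod.fst h; simp at this; omega
    have n13 : x + (1, 0) ≠ x + (0, 1) := fun h => by
      have := congrArg Prod.fst h; simp at this
    have n14 : x + (1, 0) ≠ x - (0, 1) := fun h => by
      have := congrArg Prod.fst h; simp at this
    have n23 : x - (1, 0) ≠ x + (0, 1) := fun h => by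
      have := congrArg Prod.fst h; simp at this
    have n24 : x - (1, 0) ≠ x - (0, 1) := fun h => by
      have := congrArg Prod.fst h; simp at this
    have n34 : x + (0, 1) ≠ x - (0, 1) := fun h => by
      have := congrArg Prod.snd h; simp at this; omega
    have wH : ∀ z, z = x + (1, 0) ∨ z = x - (1, 0) →
        weight q n s.1 i z = ENNReal.ofReal (hprob q (s.1.2 x) / 2) := fun z hz => by
      unfold weight; rw [if_pos hz]; rfl
    have wV : ∀ z, z = x + (0, 1) ∨ z = x - (0, 1) →
        weight q n s.1 i z = ENNReal.ofReal ((1 - hprob q (s.1.2 x)) / 2) := fun z hz => by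
      unfold weight
      rw [if_neg, if_pos hz]
      · unfold hprob; congr 2; split_ifs <;> ring
      · rcases hz with rfl | rfl
        · exact not_or.2 ⟨n13.symm, n23.symm⟩
        · exact not_or.2 ⟨n14.symm, n24.symm⟩
    rw [tsum_eq_sum (s := {x + (1, 0), x - (1, 0), x + (0, 1), x - (0, 1)})]
    · rw [Finset.sum_insert (by simp [n12, n13, n14]), Finset.sum_insert (by simp [n23, n24]),
        Finset.sum_insert (by simpa using n34), Finset.sum_singleton,
        wH _ (Or.inl rfl), wH _ (Or.inr rfl), wV _ (Or.inl rfl), wV _ (Or.inr rfl)]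
      have hp : 0 ≤ hprob q (s.1.2 x) / 2 := by linarith
      have hp' : 0 ≤ (1 - hprob q (s.1.2 x)) / 2 := by linarith
      simp only [← ENNReal.ofReal_mul (hF _)]
      rw [← ENNReal.ofReal_add, ← ENNReal.ofReal_add, ← ENNReal.ofReal_add]
      · congr 1
        unfold avg
        rw [← hx]; ring
      all_goals first
        | exact mul_nonneg (hF _) hp
        | exact mul_nonneg (hF _) hp'
        | (refine add_nonneg (mul_nonneg (hF _) ?_) (add_nonneg (mul_nonneg (hF _) ?_)
            (mul_nonneg (hF _) ?_)) <;> assumption)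
        | (refine add_nonneg (mul_nonneg (hF _) ?_) (mul_nonneg (hF _) ?_) <;> assumption)
    · intro z hz
      simp only [Finset.mem_insert, Finset.mem_singleton, not_or] at hz
      have : weight q n s.1 i z = 0 := by
        unfold weight
        rw [if_neg (not_or.2 ⟨hz.1, hz.2.1⟩), if_neg (not_or.2 ⟨hz.2.2.1, hz.2.2.2⟩)]
      rw [this, mul_zero]

/-- Extension of a finite history to a trajectory. -/
def extend {t : ℕ} (c : Fin t → Z2) : Path := fun s => if h : s < t then c ⟨s, h⟩ else (0, 0)

/-- The first `t` entries of a trajectory. -/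
def restr (t : ℕ) (y : Path) : Fin t → Z2 := fun s => y s

lemma extend_restr {t : ℕ} (y : Path) {s : ℕ} (hs : s < t) : extend (restr t y) s = y s := by
  simp [extend, restr, hs]

lemma measurable_restr (t : ℕ) : Measurable (restr t) :=
  measurable_pi_lambda _ fun _ => measurable_pi_apply _

lemma restr_eq_iff {t : ℕ} (y : Path) (c : Fin t → Z2) :
    restr t y = c ↔ ∀ s < t, y s = extend c s := by
  constructor
  · rintro rfl s hs
    exact (extend_restr y hs).symm
  · intro h
    funext s
    have h' := h s s.2
    simp only [extend, s.2, dif_pos] at h'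
    exact h'

/-- An integral depending on the first `t` steps only is a sum over the possible histories. -/
lemma lintegral_history (μ : Measure Path) (t : ℕ) (H : (Fin t → Z2) → ℝ≥0∞) :
    ∫⁻ y, H (restr t y) ∂μ = ∑' c : Fin t → Z2, H c * μ {y | ∀ s < t, y s = extend c s} := by
  rw [← lintegral_map (Measurable.of_discrete (f := H)) (measurable_restr t),
    lintegral_countable']
  refine tsum_congr fun c => ?_
  rw [Measure.map_apply (measurable_restr t) (MeasurableSet.singleton c)]
  congr 2
  ext y
  exact restr_eq_iff y c

lemma lintegral_history_succ (μ : Measure Path) (t : ℕ) (H : (Fin t → Z2) → Z2 → ℝ≥0∞) :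
    ∫⁻ y, H (restr t y) (y t) ∂μ = ∑' (c : Fin t → Z2) (z : Z2),
      H c z * μ {y | ∀ s < t + 1, y s = Function.update (extend c) t z s} := by
  have hm : Measurable fun y : Path => (restr t y, y t) :=
    (measurable_restr t).prodMk (measurable_pi_apply t)
  have h := lintegral_map (μ := μ)
    (Measurable.of_discrete (f := fun p : (Fin t → Z2) × Z2 => H p.1 p.2)) hm
  rw [← h, lintegral_countable',
    ← ENNReal.tsum_prod (f := fun c z => H c z *
      μ {y | ∀ s < t + 1, y s = Function.update (extend c) t z s})]
  refine tsum_congr fun p => ?_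
  obtain ⟨c, z⟩ := p
  rw [Measure.map_apply hm (MeasurableSet.singleton _)]
  congr 2
  ext y
  simp only [Set.mem_preimage, Set.mem_singleton_iff, Prod.mk.injEq, restr_eq_iff,
    Set.mem_ofPred_eq]
  constructor
  · rintro ⟨h1, h2⟩ s hs
    rcases Nat.lt_succ_iff_lt_or_eq.1 hs with h | rfl
    · rw [Function.update_of_ne h.ne, h1 s h]
    · rw [Function.update_self, h2]
  · intro h
    refine ⟨fun s hs => ?_, ?_⟩
    · have := h s (by omega)
      rwa [Function.update_of_ne hs.ne] at this
    · have := h t (by omega)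
      rwa [Function.update_self] at this

/-- One step of the Markov property. -/
lemma lintegral_aug_succ (hq : q ∈ Set.Ioc (0 : ℝ) 1) (hr : 1 ≤ r) {μ : Measure Path}
    (hμ : IsFrozenLaw q n hn r ρ μ) {F : AState n → ℝ} (hF : ∀ s, 0 ≤ F s) (t : ℕ) :
    ∫⁻ y, ENNReal.ofReal (F (aug n hn r ρ y (t + 1))) ∂μ =
      ∫⁻ y, ENNReal.ofReal (turn q (ball (r : ℝ)) (active n hn t) F (aug n hn r ρ y t)) ∂μ := by
  have hA : ∀ y, aug n hn r ρ y t = aug n hn r ρ (extend (restr t y)) t := fun y =>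
    aug_congr t fun s hs => (extend_restr y hs).symm
  have hL := lintegral_history_succ μ t fun c z =>
    ENNReal.ofReal (F (fmove r (aug n hn r ρ (extend c) t) (active n hn t) z))
  have hR := lintegral_history μ t fun c =>
    ENNReal.ofReal (turn q (ball (r : ℝ)) (active n hn t) F (aug n hn r ρ (extend c) t))
  simp only [← hA] at hL hR
  simp only [aug_succ]
  rw [hL, hR]
  refine tsum_congr fun c => ?_
  rw [hμ t (extend c)]
  set P := ∏ s ∈ Finset.range t,
    fweight q n r (fseq n hn r ρ (extend c) s) (active n hn s) (extend c s) with hP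
  have hcyl : ∀ z, μ {y | ∀ s < t + 1, y s = Function.update (extend c) t z s} =
      P * fweight q n r (fseq n hn r ρ (extend c) t) (active n hn t) z := fun z => by
    have hf : ∀ s ≤ t, fseq n hn r ρ (Function.update (extend c) t z) s =
        fseq n hn r ρ (extend c) s := fun s hs =>
      fseq_congr s fun u hu => Function.update_of_ne (by omega) _ _
    rw [hμ (t + 1), Finset.prod_range_succ, Function.update_self, hf t le_rfl, hP]
    congr 1
    refine Finset.prod_congr rfl fun s hs => ?_
    have hs' := Finset.mem_range.1 hs
    rw [hf s hs'.le, Function.update_of_ne hs'.ne]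
  simp only [hcyl]
  by_cases h0 : P = 0
  · simp [h0]
  · rw [← tsum_fweight hq hF (s := aug n hn r ρ (extend c) t)
      (good_of_prod_ne_zero hr _ t h0), ← ENNReal.tsum_mul_right]
    refine tsum_congr fun z => ?_
    show ENNReal.ofReal (F (fmove r (aug n hn r ρ (extend c) t) (active n hn t) z)) *
        (P * fweight q n r (fseq n hn r ρ (extend c) t) (active n hn t) z) =
      ENNReal.ofReal (F (fmove r (aug n hn r ρ (extend c) t) (active n hn t) z)) *
        fweight q n r (fseq n hn r ρ (extend c) t) (active n hn t) z * P
    rw [mul_comm P, mul_assoc]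

/-- Expectations under the law of the frozen walk are given by iterating the one-turn operator. -/
lemma lintegral_aug (hq : q ∈ Set.Ioc (0 : ℝ) 1) (hr : 1 ≤ r) {μ : Measure Path}
    [IsProbabilityMeasure μ] (hμ : IsFrozenLaw q n hn r ρ μ) (t : ℕ) {F : AState n → ℝ}
    (hF : ∀ s, 0 ≤ F s) :
    ∫⁻ y, ENNReal.ofReal (F (aug n hn r ρ y t)) ∂μ =
      ENNReal.ofReal (iter q (ball (r : ℝ)) hn t F (start n ρ)) := by
  induction t generalizing F with
  | zero => simp [aug_zero, iter]
  | succ t ih =>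
    rw [lintegral_aug_succ hq hr hμ hF, ih, iter]
    intro s
    calc (0 : ℝ) = turn q (ball (r : ℝ)) (active n hn t) (fun _ => 0) s := by rw [turn_const]
      _ ≤ _ := turn_mono hq _ hF s

lemma measure_returns (hq : q ∈ Set.Ioc (0 : ℝ) 1) (hr : 1 ≤ r) {μ : Measure Path}
    [IsProbabilityMeasure μ] (hμ : IsFrozenLaw q n hn r ρ μ) (k t : ℕ) :
    (μ {y : Path | k ≤ returns n (fun u => fseq n hn r ρ y u) t}).toReal =
      iter q (ball (r : ℝ)) hn t (goal k) (start n ρ) := by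
  classical
  set E := {y : Path | k ≤ returns n (fun u => fseq n hn r ρ y u) t} with hE
  have hmeas : MeasurableSet E := by
    have : E = restr t ⁻¹' {c | k ≤ (aug n hn r ρ (extend c) t).2} := by
      ext y
      simp only [Set.mem_preimage, Set.mem_ofPred_eq]
      rw [← aug_congr t fun s hs => (extend_restr y hs).symm]
      rfl
    rw [this]
    exact measurable_restr t (MeasurableSet.of_discrete)
  have h := lintegral_aug hq hr hμ t (goal_nonneg k)
  have h2 : ∀ y, ENNReal.ofReal (goal k (aug n hn r ρ y t)) = E.indicator 1 y := fun y => by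
    by_cases hy : y ∈ E
    · have : goal k (aug n hn r ρ y t) = 1 := if_pos hy
      rw [this, Set.indicator_of_mem hy]; simp
    · have : goal k (aug n hn r ρ y t) = 0 := if_neg hy
      rw [this, Set.indicator_of_notMem hy]; simp
  simp only [h2] at h
  rw [lintegral_indicator_one hmeas] at h
  rw [h, ENNReal.toReal_ofReal]
  exact (goal_nonneg k _).trans (iter_goal_mono hq (start n ρ) (Nat.zero_le t))

end Law

/-! ### The limits -/

section Limit

variable {n : ℕ} {q : ℝ}

/-- The limiting probability of at least `k` returns, expressed through the operators. -/
noncomputable def limProb (q : ℝ) (hn : 0 < n) (ρ : Config) (k r : ℕ) : ℝ :=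
  ⨆ t, iter q (ball (r : ℝ)) hn t (goal k) (start n ρ)

lemma bddAbove_iter_goal (hq : q ∈ Set.Ioc (0 : ℝ) 1) (hn : 0 < n) (ρ : Config) (k r : ℕ) :
    BddAbove (Set.range fun t => iter q (ball (r : ℝ)) hn t (goal k) (start n ρ)) :=
  ⟨1, by rintro _ ⟨t, rfl⟩; exact iter_goal_le_one hq t _⟩

lemma tendsto_limProb (hq : q ∈ Set.Ioc (0 : ℝ) 1) (hn : 0 < n) (ρ : Config) (k r : ℕ) :
    Tendsto (fun t => iter q (ball (r : ℝ)) hn t (goal k) (start n ρ)) atTop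
      (nhds (limProb q hn ρ k r)) :=
  tendsto_atTop_ciSup (iter_goal_mono hq _) (bddAbove_iter_goal hq hn ρ k r)

lemma returnProb_eq (hq : q ∈ Set.Ioc (0 : ℝ) 1) (hn : 0 < n) (ρ : Config) (k : ℕ) {r : ℕ}
    (hr : 1 ≤ r) {μ : Measure Path} [IsProbabilityMeasure μ] (hμ : IsFrozenLaw q n hn r ρ μ) :
    returnProb n hn r ρ μ k = limProb q hn ρ k r := by
  unfold returnProb
  simp only [measure_returns hq hr hμ k]
  exact (tendsto_limProb hq hn ρ k r).limUnder_eq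

/-- Monotonicity in `r`: in the comparison of the two regions the probability that a walker is
still unfrozen vanishes as the time horizon in the larger region tends to infinity. -/
lemma limProb_mono (hq : q ∈ Set.Ioc (0 : ℝ) 1) (hn : 0 < n) (ρ : Config) (k : ℕ) :
    Monotone (limProb q hn ρ k) := by
  intro r r' h
  have hsub : ball (r : ℝ) ⊆ ball (r' : ℝ) := fun x (hx : norm2 x < r) =>
    lt_of_lt_of_le hx (by exact_mod_cast h)
  refine ciSup_le fun t => ?_
  have := (tendsto_limProb hq hn ρ k r').add (tendsto_sum_alive hq hn r' ρ)
  rw [add_zero] at this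
  exact ge_of_tendsto' this fun u => iter_goal_le hq hsub t u _

lemma limProb_lower (hq : q ∈ Set.Ioc (0 : ℝ) 1) (hn : 0 < n) (ρ : Config) (k : ℕ) {r : ℕ}
    (hr : 2 ≤ r) :
    1 - |4 * q - 2| / (n * q) -
        (|1 - 2 * q| / q * 4 * Real.log 3 + reward * k) / (2 * n) / Real.log r ≤
      limProb q hn ρ k r := by
  have h1 := (tendsto_limProb hq hn ρ k r).add (tendsto_sum_alive hq hn r ρ)
  rw [add_zero] at h1
  have h2 := ge_of_tendsto' h1 fun t => one_sub_le_iter_goal (k := k) hq hn hr t ρ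
  refine le_trans ?_ h2
  have hr' : (2 : ℝ) ≤ r := by exact_mod_cast hr
  have hlog : 0 < Real.log r := Real.log_pos (by linarith)
  have hn' : (0 : ℝ) < n := by exact_mod_cast hn
  have hq0 := hq.1
  have h3 : Real.log (2 * r + 1) ≤ Real.log 3 + Real.log r := by
    rw [← Real.log_mul (by norm_num) (by linarith)]
    exact Real.log_le_log (by linarith) (by linarith)
  have habs : |4 * q - 2| = 2 * |1 - 2 * q| := by
    rw [show 4 * q - 2 = -(2 * (1 - 2 * q)) by ring, abs_neg, abs_mul, abs_two]
  have h4 : (|1 - 2 * q| / q * (4 * Real.log (2 * r + 1)) + reward * k) / (n * (2 * Real.log r)) ≤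
      (|1 - 2 * q| / q * (4 * (Real.log 3 + Real.log r)) + reward * k) / (n * (2 * Real.log r)) := by
    gcongr
  have h5 : (|1 - 2 * q| / q * (4 * (Real.log 3 + Real.log r)) + reward * k) /
      (n * (2 * Real.log r)) = |4 * q - 2| / (n * q) +
        (|1 - 2 * q| / q * 4 * Real.log 3 + reward * k) / (2 * n) / Real.log r := by
    rw [habs]; field_simp; ring
  linarith

end Limit

end HV

/-- **Lemma (uniform lower bound for the limiting return probabilities).**
Let `q ∈ (0,1]` and `n ≥ 1`.  Then for every `k ≥ 0` and every initial label
configuration `ρ`, the return probabilities of the frozen `n`-walker `H`–`V` walk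
satisfy `lim_{r→∞} p_{k,r}(ρ) ≥ 1 − |4q−2|/(nq)`. -/
theorem hv_limit_return_prob_lower_bound
    (q : ℝ) (hq : q ∈ Set.Ioc (0 : ℝ) 1) (n : ℕ) (hn : 0 < n)
    (k : ℕ) (ρ : HV.Config)
    (μF : ℕ → MeasureTheory.Measure HV.Path)
    (hFprob : ∀ r, MeasureTheory.IsProbabilityMeasure (μF r))
    (hμF : ∀ r : ℕ, HV.IsFrozenLaw q n hn (r : ℝ) ρ (μF r)) :
    1 - |4 * q - 2| / (n * q) ≤
      limUnder Filter.atTop fun r : ℕ => HV.returnProb n hn (r : ℝ) ρ (μF r) k := by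
  have hlim : Tendsto (HV.limProb q hn ρ k) atTop (nhds (⨆ r, HV.limProb q hn ρ k r)) :=
    tendsto_atTop_ciSup (HV.limProb_mono hq hn ρ k)
      ⟨1, by rintro _ ⟨r, rfl⟩; exact ciSup_le fun t => HV.iter_goal_le_one hq t _⟩
  have heq : (fun r : ℕ => HV.returnProb n hn (r : ℝ) ρ (μF r) k) =ᶠ[atTop]
      HV.limProb q hn ρ k := by
    filter_upwards [eventually_ge_atTop 1] with r hr
    have := hFprob r
    exact HV.returnProb_eq hq hn ρ k hr (hμF r)
  rw [(hlim.congr' heq.symm).limUnder_eq]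
  have hlow : Tendsto (fun r : ℕ => 1 - |4 * q - 2| / (n * q) -
      (|1 - 2 * q| / q * 4 * Real.log 3 + HV.reward * k) / (2 * n) / Real.log r) atTop
      (nhds (1 - |4 * q - 2| / (n * q) - 0)) :=
    tendsto_const_nhds.sub (tendsto_const_nhds.div_atTop
      (Real.tendsto_log_atTop.comp tendsto_natCast_atTop_atTop))
  rw [sub_zero] at hlow
  refine le_of_tendsto_of_tendsto hlow hlim ?_
  filter_upwards [eventually_ge_atTop 2] with r hr
  exact HV.limProb_lower hq hn ρ k hr
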